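/- arXiv:2405.14914 — 4 statements merged into one kernel-verified Lean document; each statement's English description precedes it below -/
import Mathlib

section
/- Let Q be a finite quiver, α ≥ 1, r ∈ ℕ^{Q₀}, λ ∈ ℤ^{Q₀}, and let 𝔽_q be a finite field of characteristic p > Σ_i |λ_i| r_i; set R := 𝔽_q[t]/(t^α). Let x be a locally free representation of rank r over R. Then there exists y with μ(x,y) = (t^{α−1} λ_i · Id_{r_i})_{i∈Q₀} if and only if every rank vector r' of a direct summand of x satisfies Σ_i λ_i r'_i = 0 (as an equality of integers). -/
/-- A finite quiver (equivalently, a finite multigraph with a chosen orientation of each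
edge): finitely many vertices and arrows, with source and target maps. -/
structure FinQuiver where
  V : Type
  E : Type
  [fintypeV : Fintype V]
  [fintypeE : Fintype E]
  [decEqV : DecidableEq V]
  s : E → V
  t : E → V

attribute [instance] FinQuiver.fintypeV FinQuiver.fintypeE FinQuiver.decEqV

namespace FinQuiver

/-- The adjacency (simple) graph of the underlying multigraph: two vertices are adjacent
if some edge joins them.  Connectivity of the multigraph only depends on this graph. -/
def adjGraph (G : FinQuiver) : SimpleGraph G.V :=
  SimpleGraph.fromRel fun a b => ∃ e : G.E, G.s e = a ∧ G.t e = b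

/-- The number of connected components of the underlying multigraph. -/
noncomputable def c (G : FinQuiver) : ℕ :=
  Nat.card G.adjGraph.ConnectedComponent

/-- The Betti number `b(Q) = c(Q) - #Q₀ + #Q₁` of the underlying multigraph. -/
noncomputable def betti (G : FinQuiver) : ℤ :=
  (G.c : ℤ) - Fintype.card G.V + Fintype.card G.E

/-- The underlying multigraph is connected. -/
def Connected (G : FinQuiver) : Prop := G.adjGraph.Connected

/-- Deletion of the edge `e`. -/
noncomputable def deleteEdge (G : FinQuiver) (e : G.E) : FinQuiver :=
  letI : DecidableEq G.E := Classical.decEq _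
  { V := G.V, E := {e' : G.E // e' ≠ e}, s := fun e' => G.s e'.1, t := fun e' => G.t e'.1 }

/-- The underlying multigraph is 2-connected: it is connected and stays connected after
deleting any single edge. -/
def TwoConnected (G : FinQuiver) : Prop :=
  G.Connected ∧ ∀ e : G.E, (G.deleteEdge e).Connected

/-- Restriction `Q|_I` to a subset `I` of the vertices (full sub(multi)graph). -/
noncomputable def restrictV (G : FinQuiver) (I : Set G.V) : FinQuiver :=
  letI : DecidablePred (· ∈ I) := Classical.decPred _
  { V := ↥I
    E := {e : G.E // G.s e ∈ I ∧ G.t e ∈ I}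
    s := fun e => ⟨G.s e.1, e.2.1⟩
    t := fun e => ⟨G.t e.1, e.2.2⟩ }

/-- Restriction `Q|_J` to a subset `J` of the edges (keeping all vertices). -/
noncomputable def restrictE (G : FinQuiver) (J : Set G.E) : FinQuiver :=
  letI : DecidablePred (· ∈ J) := Classical.decPred _
  { V := G.V
    E := ↥J
    s := fun e => G.s e.1
    t := fun e => G.t e.1 }

end FinQuiver

/-- The ring of truncated polynomials `F[t]/(t^α)`. -/
abbrev TruncRing (F : Type) [CommRing F] (α : ℕ) : Type :=
  Polynomial F ⧸ Ideal.span {(Polynomial.X : Polynomial F) ^ α}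

/-- The image of `t` in `F[t]/(t^α)`. -/
noncomputable def tvar (F : Type) [CommRing F] (α : ℕ) : TruncRing F α :=
  Ideal.Quotient.mk _ (Polynomial.X : Polynomial F)
/-- A locally free representation of rank `r` of the quiver `G` over `R`: a matrix
`x_a` of size `r_{t(a)} × r_{s(a)}` for every arrow `a`. -/
abbrev QRep (G : FinQuiver) (R : Type) [CommRing R] (r : G.V → ℕ) : Type :=
  ∀ a : G.E, Matrix (Fin (r (G.t a))) (Fin (r (G.s a))) R

/-- The second component of a pair in the doubled quiver: a matrix `y_a` of size
`r_{s(a)} × r_{t(a)}` for every arrow `a`. -/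
abbrev QCoRep (G : FinQuiver) (R : Type) [CommRing R] (r : G.V → ℕ) : Type :=
  ∀ a : G.E, Matrix (Fin (r (G.s a))) (Fin (r (G.t a))) R

/-- The moment map of the quiver `G`:
`μ(x,y)_i := Σ_{a : t(a)=i} x_a y_a − Σ_{a : s(a)=i} y_a x_a`. -/
noncomputable def momentMap (G : FinQuiver) {R : Type} [CommRing R] {r : G.V → ℕ}
    (x : QRep G R r) (y : QCoRep G R r) (i : G.V) : Matrix (Fin (r i)) (Fin (r i)) R :=
  (∑ a : G.E, if h : G.t a = i then
      cast (congrArg (fun v => Matrix (Fin (r v)) (Fin (r v)) R) h) (x a * y a) else 0)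
  - ∑ a : G.E, if h : G.s a = i then
      cast (congrArg (fun v => Matrix (Fin (r v)) (Fin (r v)) R) h) (y a * x a) else 0

/-- The Euler form `⟨r,r'⟩ := Σ_{i∈Q₀} r_i r'_i − Σ_{a∈Q₁} r_{s(a)} r'_{t(a)}` of `G`. -/
def eulerForm (G : FinQuiver) (r r' : G.V → ℕ) : ℤ :=
  ∑ i : G.V, (r i : ℤ) * (r' i : ℤ) - ∑ a : G.E, (r (G.s a) : ℤ) * (r' (G.t a) : ℤ)

/-- The change-of-basis action of `GL_{α,r} = ∏_i GL_{r_i}(R)` on representations: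
`(g·x)_a := g_{t(a)} x_a g_{s(a)}⁻¹`. -/
def glAct (G : FinQuiver) {R : Type} [CommRing R] {r : G.V → ℕ}
    (g : ∀ i : G.V, (Matrix (Fin (r i)) (Fin (r i)) R)ˣ) (x : QRep G R r) : QRep G R r :=
  fun a => (g (G.t a) : Matrix (Fin (r (G.t a))) (Fin (r (G.t a))) R) * x a *
    (((g (G.s a))⁻¹ : (Matrix (Fin (r (G.s a))) (Fin (r (G.s a))) R)ˣ) :
      Matrix (Fin (r (G.s a))) (Fin (r (G.s a))) R)

/-- `A` is block-diagonal for the splittings `m = m' + (m − m')`, `n = n' + (n − n')`: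
all entries `A k l` with `(k < m') ↮ (l < n')` vanish. -/
def IsBlockDiag {R : Type} [CommRing R] {m n : ℕ} (m' n' : ℕ)
    (A : Matrix (Fin m) (Fin n) R) : Prop :=
  ∀ (k : Fin m) (l : Fin n), ¬ ((k : ℕ) < m' ↔ (l : ℕ) < n') → A k l = 0

/-- `r'` is the rank vector of a direct summand of the representation `x`: for some
complementary rank vector `r''` with `r' + r'' = r`, some change of basis `g` makes all
matrices of `x` block-diagonal with diagonal blocks of sizes prescribed by `r'`, `r''`.
(In particular `r' = 0` and `r' = r` always qualify.) -/
def IsSummandRank (G : FinQuiver) {R : Type} [CommRing R] {r : G.V → ℕ}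
    (x : QRep G R r) (r' : G.V → ℕ) : Prop :=
  ∃ r'' : G.V → ℕ, (∀ i, r' i + r'' i = r i) ∧
    ∃ g : ∀ i : G.V, (Matrix (Fin (r i)) (Fin (r i)) R)ˣ,
      ∀ a : G.E, IsBlockDiag (r' (G.t a)) (r' (G.s a)) (glAct G g x a)

/-- `x` is decomposable: it is a direct sum of two representations of nonzero ranks. -/
def Decomposable (G : FinQuiver) {R : Type} [CommRing R] {r : G.V → ℕ}
    (x : QRep G R r) : Prop :=
  ∃ r' r'' : G.V → ℕ, (∀ i, r' i + r'' i = r i) ∧ r' ≠ 0 ∧ r'' ≠ 0 ∧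
    ∃ g : ∀ i : G.V, (Matrix (Fin (r i)) (Fin (r i)) R)ˣ,
      ∀ a : G.E, IsBlockDiag (r' (G.t a)) (r' (G.s a)) (glAct G g x a)

section CharpolyRoots

open Polynomial
variable {K : Type*} [Field K] [IsAlgClosed K] {n : Type*} [Fintype n] [DecidableEq n]

theorem Matrix.card_roots_charpoly_of_isAlgClosed (A : Matrix n n K) :
    A.charpoly.roots.card = Fintype.card n := by
  rw [← (IsAlgClosed.splits A.charpoly).natDegree_eq_card_roots, A.charpoly_natDegree_eq_dim]

theorem Matrix.det_aeval_X_sub_C (A : Matrix n n K) (d : K) :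
    (aeval A (X - C d)).det = (A.charpoly.roots.map fun c => c - d).prod := by
  have h : aeval A (X - C d) = -(Matrix.scalar n d - A) := by
    simp [Matrix.algebraMap_eq_diagonal, Matrix.scalar_apply, Pi.algebraMap_def]
  rw [h, Matrix.det_neg, ← Matrix.eval_charpoly,
    (IsAlgClosed.splits A.charpoly).eval_eq_prod_roots_of_monic A.charpoly_monic,
    ← A.card_roots_charpoly_of_isAlgClosed]
  have := Multiset.prod_map_neg (A.charpoly.roots.map fun c => d - c)
  simpa using this.symm

/-- The determinant of `f(A)` is the product of the values of `f` at the eigenvalues of `A`. -/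
theorem Matrix.det_aeval_eq_prod_roots_charpoly (A : Matrix n n K) (f : K[X]) :
    (aeval A f).det = (A.charpoly.roots.map fun c => f.eval c).prod := by
  rw [(IsAlgClosed.splits f).eq_prod_roots]
  generalize f.roots = s
  simp only [map_mul, eval_mul, Multiset.prod_map_mul, Matrix.det_mul]
  congr 1
  · simp [Matrix.algebraMap_eq_diagonal, Pi.algebraMap_def,
      A.card_roots_charpoly_of_isAlgClosed]
  · induction s using Multiset.induction with
    | empty => simp
    | cons d s ih =>
      simp only [Multiset.map_cons, Multiset.prod_cons, map_mul, eval_mul, Multiset.prod_map_mul,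
        Matrix.det_mul, ih, Matrix.det_aeval_X_sub_C]
      simp

/-- The eigenvalues of `f(A)`, with multiplicity, are the values of `f` at those of `A`. -/
theorem Matrix.roots_charpoly_aeval (A : Matrix n n K) (f : K[X]) :
    (aeval A f).charpoly.roots = A.charpoly.roots.map fun c => f.eval c := by
  have h : (aeval A f).charpoly = ((A.charpoly.roots.map fun c => f.eval c).map
      fun c => X - C c).prod := by
    refine Polynomial.funext fun z => ?_
    have h1 : Matrix.scalar n z - aeval A f = aeval A (C z - f) := by
      simp [Matrix.algebraMap_eq_diagonal, Matrix.scalar_apply, Pi.algebraMap_def]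
    rw [Matrix.eval_charpoly, h1, Matrix.det_aeval_eq_prod_roots_charpoly, eval_multiset_prod]
    simp
  rw [h, roots_multiset_prod_X_sub_C]

theorem Matrix.trace_aeval_eq_sum_roots_charpoly (A : Matrix n n K) (f : K[X]) :
    (aeval A f).trace = (A.charpoly.roots.map fun c => f.eval c).sum := by
  rw [Matrix.trace_eq_sum_roots_charpoly, Matrix.roots_charpoly_aeval]

theorem Matrix.isIdempotentElem_eval_of_mem_roots_charpoly {A : Matrix n n K} {f : K[X]}
    (hf : IsIdempotentElem (aeval A f)) {c : K} (hc : c ∈ A.charpoly.roots) :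
    IsIdempotentElem (f.eval c) := by
  have h0 : aeval A (f * f - f) = 0 := by
    rw [map_sub, map_mul, hf.eq, sub_self]
  have h := A.roots_charpoly_aeval (f * f - f)
  rw [h0, Matrix.charpoly_zero] at h
  have hm : (f * f - f).eval c ∈ (X ^ Fintype.card n : K[X]).roots := by
    rw [h]; exact Multiset.mem_map_of_mem _ hc
  rw [roots_X_pow] at hm
  have := Multiset.mem_of_mem_nsmul hm
  simpa [sub_eq_zero, IsIdempotentElem] using this

end CharpolyRoots

section FactorMultiplicity

open Polynomial UniqueFactorizationMonoid

variable {F : Type*} [Field F] [DecidableEq F]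

theorem Polynomial.monic_of_mem_normalizedFactors {f P : F[X]} (hP : P ∈ normalizedFactors f) :
    P.Monic := by
  have h0 : P ≠ 0 := (irreducible_of_normalized_factor P hP).ne_zero
  rw [← normalize_normalized_factor P hP]
  exact monic_normalize h0

theorem Polynomial.Monic.prod_normalizedFactors {f : F[X]} (hf : f.Monic) :
    (normalizedFactors f).prod = f := by
  simpa [hf.leadingCoeff] using leadingCoeff_mul_prod_normalizedFactors f

/-- The roots shared by `f` and one of its irreducible factors `P`, counted with multiplicity. -/
theorem Polynomial.sum_aroots_ite_eq_count {K : Type*} [Field K] [IsAlgClosed K] [Algebra F K]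
    [DecidableEq K] {f P : F[X]} (hf : f.Monic) (hP : Irreducible P) (hPm : P.Monic) :
    ((f.aroots K).map fun c => if aeval c P = 0 then (1 : ℕ) else 0).sum
      = (normalizedFactors f).count P * P.natDegree := by
  have hmon : ∀ p ∈ normalizedFactors f, p.Monic := fun p => monic_of_mem_normalizedFactors
  have hirr : ∀ p ∈ normalizedFactors f, Irreducible p := irreducible_of_normalized_factor
  conv_lhs => rw [← hf.prod_normalizedFactors]
  generalize normalizedFactors f = s at hmon hirr
  induction s using Multiset.induction with
  | empty => simp
  | cons p s ih =>
    have hp := hmon p (Multiset.mem_cons_self p s)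
    have hpi := hirr p (Multiset.mem_cons_self p s)
    have hs : s.prod.Monic := by
      simpa using monic_multiset_prod_of_monic s id
        fun q hq => hmon q (Multiset.mem_cons_of_mem hq)
    rw [Multiset.prod_cons, aroots_mul (mul_ne_zero hp.ne_zero hs.ne_zero), Multiset.map_add,
      Multiset.sum_add, ih (fun q hq => hmon q (Multiset.mem_cons_of_mem hq))
        (fun q hq => hirr q (Multiset.mem_cons_of_mem hq)), Multiset.count_cons, add_mul, add_comm]
    congr 1
    split_ifs with h
    · subst h
      rw [Multiset.map_congr rfl (g := fun _ => 1)]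
      · simp [aroots, ← (IsAlgClosed.splits (P.map (algebraMap F K))).natDegree_eq_card_roots]
      · intro c hc
        rw [if_pos ((mem_aroots.mp hc).2)]
    · rw [Multiset.map_congr rfl (g := fun _ => 0)]
      · simp
      · intro c hc
        rw [if_neg]
        intro hc'
        have h1 := minpoly.eq_of_irreducible_of_monic hP hc' hPm
        have h2 := minpoly.eq_of_irreducible_of_monic hpi ((mem_aroots.mp hc).2) hp
        exact h (h1.trans h2.symm)

/-- If a positive power of `P(A)` is idempotent, the trace of the complementary idempotent is the
total degree of the `P`-primary part of the characteristic polynomial. -/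
theorem Matrix.trace_one_sub_aeval_pow {n : Type*} [Fintype n] [DecidableEq n]
    (A : Matrix n n F) {P : F[X]} (hP : Irreducible P) (hPm : P.Monic) {N : ℕ} (hN : N ≠ 0)
    (hid : IsIdempotentElem (aeval A P ^ N)) :
    (1 - aeval A P ^ N).trace
      = (((normalizedFactors A.charpoly).count P * P.natDegree : ℕ) : F) := by
  classical
  let K := AlgebraicClosure F
  let φ := algebraMap F K
  apply φ.injective
  let B : Matrix n n K := A.map φ
  let f : K[X] := 1 - (P.map φ) ^ N
  have hB : (1 - aeval A P ^ N).map φ = aeval B f := by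
    change φ.mapMatrix (1 - aeval A P ^ N) = aeval B f
    have h2 : φ.mapMatrix (aeval A P) = aeval B (P.map φ) := by
      have h3 := Polynomial.aeval_algHom_apply ((Algebra.ofId F K).mapMatrix (m := n)) A P
      rw [aeval_map_algebraMap]
      exact h3.symm
    simp only [f, map_sub, map_one, map_pow, h2]
  have hidB : IsIdempotentElem (aeval B f) := by
    rw [← hB]
    exact hid.one_sub.map φ.mapMatrix
  have hval : ∀ c ∈ B.charpoly.roots, f.eval c = ((if aeval c P = 0 then 1 else 0 : ℕ) : K) := by
    intro c hc
    have hi := Matrix.isIdempotentElem_eval_of_mem_roots_charpoly hidB hc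
    have he : f.eval c = 1 - (aeval c P) ^ N := by
      simp [f, eval_map_algebraMap, φ]
    rw [he] at hi ⊢
    rcases IsIdempotentElem.iff_eq_zero_or_one.mp hi with h | h
    · rw [if_neg, h, Nat.cast_zero]
      intro h0
      simp [h0, hN] at h
    · have h0 : aeval c P = 0 := by
        by_contra hne
        exact pow_ne_zero N hne (by linear_combination -h)
      simp [h0, hN]
  have hroots : B.charpoly.roots = A.charpoly.aroots K := by
    rw [Matrix.charpoly_map, aroots]
  have htr : φ (1 - aeval A P ^ N).trace = (aeval B f).trace := by
    rw [← hB]; exact AddMonoidHom.map_trace φ.toAddMonoidHom _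
  rw [htr, Matrix.trace_aeval_eq_sum_roots_charpoly, Multiset.map_congr rfl hval, hroots,
    map_natCast, ← Polynomial.sum_aroots_ite_eq_count (K := K) A.charpoly_monic hP hPm,
    Nat.cast_multiset_sum, Multiset.map_map]
  rfl

theorem Matrix.trace_eq_neg_sum_nextCoeff {n : Type*} [Fintype n] [DecidableEq n]
    (A : Matrix n n F) (s : Finset F[X]) (hs : (normalizedFactors A.charpoly).toFinset ⊆ s) :
    A.trace = -∑ P ∈ s, ((normalizedFactors A.charpoly).count P : F) * P.nextCoeff := by
  rw [Matrix.trace_eq_neg_charpoly_nextCoeff]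
  congr 1
  conv_lhs => rw [← A.charpoly_monic.prod_normalizedFactors]
  have h := Monic.nextCoeff_multiset_prod (normalizedFactors A.charpoly) id
    fun p hp => monic_of_mem_normalizedFactors hp
  rw [Multiset.map_id] at h
  rw [h, Finset.sum_multiset_map_count]
  simp only [nsmul_eq_mul, id]
  refine Finset.sum_subset hs fun P _ hP => ?_
  rw [Multiset.mem_toFinset] at hP
  simp [Multiset.count_eq_zero_of_notMem hP]

theorem Matrix.count_normalizedFactors_charpoly_mul_natDegree_le {n : Type*} [Fintype n]
    [DecidableEq n] (A : Matrix n n F) (P : F[X]) :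
    (normalizedFactors A.charpoly).count P * P.natDegree ≤ Fintype.card n := by
  rw [← A.charpoly_natDegree_eq_dim, ← natDegree_pow]
  refine natDegree_le_of_dvd ?_ A.charpoly_monic.ne_zero
  conv_rhs => rw [← A.charpoly_monic.prod_normalizedFactors]
  rw [← Multiset.prod_replicate]
  exact Multiset.prod_dvd_prod_of_le (Multiset.le_count_iff_replicate_le.mp le_rfl)

end FactorMultiplicity

namespace QRep

open Matrix

variable {G : FinQuiver} {R : Type} [CommRing R] {r : G.V → ℕ}

/-- A family of square matrices, one for each vertex, is an endomorphism of `x` if it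
commutes with all the matrices of `x`. -/
def IsEndo (x : QRep G R r) (e : ∀ i : G.V, Matrix (Fin (r i)) (Fin (r i)) R) : Prop :=
  ∀ a, e (G.t a) * x a = x a * e (G.s a)

/-- The subalgebra of endomorphisms of a representation, inside the ring of all families of
square matrices. -/
def endo (F : Type) [Field F] [Algebra F R] (x : QRep G R r) :
    Subalgebra F (∀ i : G.V, Matrix (Fin (r i)) (Fin (r i)) R) where
  carrier := {e | x.IsEndo e}
  mul_mem' {e f} he hf a := by
    rw [Pi.mul_apply, Pi.mul_apply, Matrix.mul_assoc, hf a, ← Matrix.mul_assoc, he a,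
      Matrix.mul_assoc]
  add_mem' {e f} he hf a := by
    rw [Pi.add_apply, Pi.add_apply, Matrix.add_mul, Matrix.mul_add, he a, hf a]
  algebraMap_mem' c a := by
    simp [Algebra.algebraMap_eq_smul_one]

end QRep

section MomentMap

open Matrix

variable {G : FinQuiver} {R : Type} [CommRing R] {r : G.V → ℕ}

theorem momentMap_eq_sum_single (x : QRep G R r) (y : QCoRep G R r) :
    momentMap G x y = ∑ a, Pi.single (G.t a) (x a * y a) - ∑ a, Pi.single (G.s a) (y a * x a) := by
  have key : ∀ (v i : G.V) (M : Matrix (Fin (r v)) (Fin (r v)) R),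
      (if h : v = i then cast (congrArg (fun v => Matrix (Fin (r v)) (Fin (r v)) R) h) M else 0)
        = (Pi.single v M : ∀ i : G.V, Matrix (Fin (r i)) (Fin (r i)) R) i := by
    intro v i M
    by_cases h : v = i
    · subst h; simp
    · rw [dif_neg h, Pi.single_eq_of_ne (Ne.symm h)]
  funext i
  rw [momentMap, Pi.sub_apply, Finset.sum_apply, Finset.sum_apply]
  simp only [key]

variable (F : Type) [Field F] [Algebra F R]

/-- The moment map at a fixed representation, as a linear map. -/
noncomputable def momentMapLinear (x : QRep G R r) :
    QCoRep G R r →ₗ[F] ∀ i : G.V, Matrix (Fin (r i)) (Fin (r i)) R where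
  toFun := momentMap G x
  map_add' y z := by
    simp only [momentMap_eq_sum_single, Pi.add_apply, Matrix.add_mul, Matrix.mul_add,
      Pi.single_add, Finset.sum_add_distrib]
    abel
  map_smul' c y := by
    simp only [momentMap_eq_sum_single, Pi.smul_apply, Matrix.smul_mul, Matrix.mul_smul,
      Pi.single_smul, Finset.smul_sum, smul_sub, RingHom.id_apply]

theorem sum_trace_mul_momentMap (x : QRep G R r) (y : QCoRep G R r)
    (e : ∀ i : G.V, Matrix (Fin (r i)) (Fin (r i)) R) :
    ∑ i, (e i * momentMap G x y i).trace
      = ∑ a, ((e (G.t a) * x a - x a * e (G.s a)) * y a).trace := by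
  have key : ∀ (v : G.V) (M : Matrix (Fin (r v)) (Fin (r v)) R),
      ∑ i, (e i * (Pi.single v M : ∀ i : G.V, Matrix (Fin (r i)) (Fin (r i)) R) i).trace
        = (e v * M).trace := by
    intro v M
    rw [Finset.sum_eq_single v]
    · simp
    · intro i _ hi
      simp [Pi.single_eq_of_ne hi]
    · simp
  simp only [momentMap_eq_sum_single, Pi.sub_apply, Finset.sum_apply, Matrix.mul_sub,
    Matrix.mul_sum, Matrix.trace_sub, Matrix.trace_sum, Finset.sum_sub_distrib, Matrix.sub_mul]
  rw [Finset.sum_comm, Finset.sum_comm (γ := G.V)]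
  simp only [key]
  congr 1
  · simp [Matrix.mul_assoc]
  · refine Finset.sum_congr rfl fun a _ => ?_
    rw [← Matrix.mul_assoc, Matrix.trace_mul_comm, Matrix.mul_assoc]

variable {F} {res : R →ₗ[F] F}

theorem Matrix.eq_zero_of_forall_apply_trace_mul_eq_zero {m n : Type} [Fintype m] [Fintype n]
    (hres : ∀ a, (∀ b, res (a * b) = 0) → a = 0) (M : Matrix m n R)
    (hM : ∀ N : Matrix n m R, res (M * N).trace = 0) : M = 0 := by
  classical
  ext k l
  refine hres _ fun b => ?_
  have := hM (Matrix.single l k b)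
  rwa [Matrix.trace_mul_single] at this

/-- If `res` is a Frobenius form on `R`, every linear functional on families of square matrices
is of the form `M ↦ ∑ i, res (tr (e i * M i))`. -/
theorem exists_trace_representation [Module.Finite F R]
    (hres : ∀ a, (∀ b, res (a * b) = 0) → a = 0)
    (φ : (∀ i : G.V, Matrix (Fin (r i)) (Fin (r i)) R) →ₗ[F] F) :
    ∃ e : ∀ i : G.V, Matrix (Fin (r i)) (Fin (r i)) R,
      ∀ M, φ M = ∑ i, res (e i * M i).trace := by
  let B : (∀ i : G.V, Matrix (Fin (r i)) (Fin (r i)) R) →ₗ[F]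
      Module.Dual F (∀ i : G.V, Matrix (Fin (r i)) (Fin (r i)) R) :=
    LinearMap.mk₂ F (fun e M => ∑ i, res (e i * M i).trace)
      (by intros; simp [Matrix.add_mul, Finset.sum_add_distrib])
      (by intros; simp [Finset.mul_sum])
      (by intros; simp [Matrix.mul_add, Finset.sum_add_distrib])
      (by intros; simp [Finset.mul_sum])
  have hB : Function.Injective B := by
    rw [injective_iff_map_eq_zero]
    intro e he
    funext i
    refine Matrix.eq_zero_of_forall_apply_trace_mul_eq_zero hres _ fun N => ?_
    have h := LinearMap.congr_fun he (Pi.single i N)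
    change ∑ j, res (e j * (Pi.single i N :
      ∀ i : G.V, Matrix (Fin (r i)) (Fin (r i)) R) j).trace = 0 at h
    rw [Finset.sum_eq_single i] at h
    · simpa using h
    · intro j _ hj
      simp [Pi.single_eq_of_ne hj]
    · simp
  obtain ⟨e, he⟩ := (LinearMap.injective_iff_surjective_of_finrank_eq_finrank
    (Subspace.dual_finrank_eq).symm).mp hB φ
  exact ⟨e, fun M => by rw [← he]; rfl⟩

/-- The image of the moment map is the orthogonal of the endomorphism ring. -/
theorem exists_momentMap_eq_iff [Module.Finite F R]
    (hres : ∀ a, (∀ b, res (a * b) = 0) → a = 0) (x : QRep G R r)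
    (b : ∀ i : G.V, Matrix (Fin (r i)) (Fin (r i)) R) :
    (∃ y, momentMap G x y = b) ↔
      ∀ e ∈ x.endo F, ∑ i, res (e i * b i).trace = 0 := by
  constructor
  · rintro ⟨y, rfl⟩ e he
    rw [← map_sum, sum_trace_mul_momentMap, Finset.sum_eq_zero, map_zero]
    intro a _
    rw [he a, sub_self, Matrix.zero_mul, Matrix.trace_zero]
  · intro h
    by_contra hb
    have hb' : b ∉ LinearMap.range (momentMapLinear F x) := hb
    obtain ⟨φ, hφb, hφ⟩ := Submodule.exists_le_ker_of_notMem hb'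
    obtain ⟨e, he⟩ := exists_trace_representation hres φ
    refine hφb ((he b).trans (h e fun a => ?_))
    rw [← sub_eq_zero]
    refine Matrix.eq_zero_of_forall_apply_trace_mul_eq_zero hres _ fun N => ?_
    classical
    have h0 : φ (momentMap G x (Pi.single a N)) = 0 := hφ ⟨Pi.single a N, rfl⟩
    rw [he, ← map_sum, sum_trace_mul_momentMap, Finset.sum_eq_single a] at h0
    · simpa using h0
    · intro a' _ ha'
      simp [Pi.single_eq_of_ne ha']
    · simp

end MomentMap

section Summands

open Matrix

variable {G : FinQuiver} {R : Type} [CommRing R] {r : G.V → ℕ}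

/-- The diagonal projector onto the first `k` coordinates. -/
def Matrix.diagProj (R : Type) [CommRing R] (n k : ℕ) : Matrix (Fin n) (Fin n) R :=
  Matrix.diagonal fun j => if (j : ℕ) < k then 1 else 0

theorem Matrix.trace_diagProj {n k : ℕ} (h : k ≤ n) : (Matrix.diagProj R n k).trace = k := by
  rw [Matrix.diagProj, Matrix.trace_diagonal, Fin.sum_univ_eq_sum_range
    (fun j => if j < k then (1 : R) else 0), Finset.sum_boole]
  congr 1
  have : (Finset.range n).filter (· < k) = Finset.range k := by
    ext j; simp; omega
  rw [this, Finset.card_range]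

theorem isBlockDiag_iff_diagProj_mul {m n m' n' : ℕ} (A : Matrix (Fin m) (Fin n) R) :
    IsBlockDiag m' n' A ↔ Matrix.diagProj R m m' * A = A * Matrix.diagProj R n n' := by
  rw [← Matrix.ext_iff]
  refine forall_congr' fun k => forall_congr' fun l => ?_
  rw [Matrix.diagProj, Matrix.diagProj, Matrix.diagonal_mul, Matrix.mul_diagonal]
  by_cases hk : (k : ℕ) < m' <;> by_cases hl : (l : ℕ) < n' <;> simp [hk, hl, eq_comm]

theorem isBlockDiag_glAct_iff (x : QRep G R r) (r' : G.V → ℕ)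
    (g : ∀ i : G.V, (Matrix (Fin (r i)) (Fin (r i)) R)ˣ) :
    (∀ a, IsBlockDiag (r' (G.t a)) (r' (G.s a)) (glAct G g x a)) ↔
      x.IsEndo fun i => (g i)⁻¹.val * Matrix.diagProj R (r i) (r' i) * (g i).val := by
  refine forall_congr' fun a => ?_
  beta_reduce
  rw [isBlockDiag_iff_diagProj_mul, glAct]
  have h1 : ∀ i, (g i)⁻¹.val * (g i).val = 1 := fun i => (g i).inv_mul
  have h2 : ∀ i, (g i).val * (g i)⁻¹.val = 1 := fun i => (g i).mul_inv
  generalize Matrix.diagProj R (r (G.t a)) (r' (G.t a)) = D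
  generalize Matrix.diagProj R (r (G.s a)) (r' (G.s a)) = E
  constructor <;> intro h
  · have h' := congrArg (fun M => (g (G.t a))⁻¹.val * M * (g (G.s a)).val) h
    simp only [Matrix.mul_assoc] at h' ⊢
    rwa [h1, Matrix.mul_one, ← Matrix.mul_assoc (g (G.t a))⁻¹.val (g (G.t a)).val, h1,
      Matrix.one_mul] at h'
  · have h' := congrArg (fun M => (g (G.t a)).val * M * (g (G.s a))⁻¹.val) h
    simp only [Matrix.mul_assoc] at h' ⊢
    rwa [h2, Matrix.mul_one, ← Matrix.mul_assoc (g (G.t a)).val (g (G.t a))⁻¹.val, h2,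
      Matrix.one_mul] at h'

theorem isSummandRank_iff (x : QRep G R r) (r' : G.V → ℕ) :
    IsSummandRank G x r' ↔ r' ≤ r ∧ ∃ g : ∀ i : G.V, (Matrix (Fin (r i)) (Fin (r i)) R)ˣ,
      x.IsEndo fun i => (g i)⁻¹.val * Matrix.diagProj R (r i) (r' i) * (g i).val := by
  simp only [IsSummandRank, isBlockDiag_glAct_iff]
  constructor
  · rintro ⟨r'', hr, h⟩
    exact ⟨fun i => by rw [← hr i]; exact Nat.le_add_right _ _, h⟩
  · rintro ⟨hr, h⟩
    exact ⟨fun i => r i - r' i, fun i => Nat.add_sub_cancel' (hr i), h⟩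

theorem Matrix.trace_conj_diagProj {n k : ℕ} (h : k ≤ n) (g : (Matrix (Fin n) (Fin n) R)ˣ) :
    (g⁻¹.val * Matrix.diagProj R n k * g.val).trace = k := by
  rw [Matrix.trace_mul_comm, ← Matrix.mul_assoc, Units.mul_inv, Matrix.one_mul,
    Matrix.trace_diagProj h]

theorem Submodule.projective_of_isCompl {M : Type*} [AddCommGroup M] [Module R M]
    [Module.Projective R M] {p q : Submodule R M} (h : IsCompl p q) : Module.Projective R p :=
  Module.Projective.of_split p.subtype (p.projectionOnto q h)
    (Submodule.projectionOnto_comp_subtype h)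

theorem Submodule.finite_of_isCompl {M : Type*} [AddCommGroup M] [Module R M]
    [Module.Finite R M] {p q : Submodule R M} (h : IsCompl p q) : Module.Finite R p :=
  Module.Finite.of_surjective (p.projectionOnto q h)
    (Submodule.projectionOnto_surjective h)

theorem Submodule.free_of_isCompl_of_isLocalRing [IsLocalRing R] {M : Type*} [AddCommGroup M]
    [Module R M] [Module.Finite R M] [Module.Projective R M] {p q : Submodule R M}
    (h : IsCompl p q) : Module.Free R p := by
  have := Submodule.projective_of_isCompl h
  have := Submodule.finite_of_isCompl h
  exact Module.free_of_flat_of_isLocalRing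

/-- Over a local ring every idempotent matrix is conjugate to a diagonal projector. -/
theorem Matrix.exists_conj_diagProj_of_isIdempotentElem [IsLocalRing R] {n : ℕ}
    {E : Matrix (Fin n) (Fin n) R} (hE : IsIdempotentElem E) :
    ∃ k ≤ n, ∃ g : (Matrix (Fin n) (Fin n) R)ˣ, E = g⁻¹.val * Matrix.diagProj R n k * g.val := by
  let f : Module.End R (Fin n → R) := Matrix.toLin' E
  have hf : IsIdempotentElem f := by
    change f ∘ₗ f = f
    rw [← Matrix.toLin'_mul, hE.eq]
  have hc : IsCompl (LinearMap.range f) (LinearMap.ker f) := LinearMap.IsIdempotentElem.isCompl hf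
  have := Submodule.free_of_isCompl_of_isLocalRing hc
  have := Submodule.free_of_isCompl_of_isLocalRing hc.symm
  have := Submodule.finite_of_isCompl hc
  have := Submodule.finite_of_isCompl hc.symm
  let k := Module.finrank R (LinearMap.range f)
  let l := Module.finrank R (LinearMap.ker f)
  let c₀ : Module.Basis (Fin k ⊕ Fin l) R (Fin n → R) :=
    ((Module.finBasis R (LinearMap.range f)).prod (Module.finBasis R (LinearMap.ker f))).map
      (Submodule.prodEquivOfIsCompl _ _ hc)
  have hkl : k + l = n := by
    have h1 := Module.finrank_eq_card_basis c₀
    simpa using h1.symm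
  let c : Module.Basis (Fin n) R (Fin n → R) :=
    c₀.reindex (finSumFinEquiv.trans (finCongr hkl))
  have hl : ∀ j : Fin k, f (c₀ (Sum.inl j)) = c₀ (Sum.inl j) := by
    intro j
    simp only [c₀, Module.Basis.map_apply, Module.Basis.prod_apply, Sum.elim_inl,
      Function.comp_apply, LinearMap.inl_apply, Submodule.coe_prodEquivOfIsCompl',
      ZeroMemClass.coe_zero, add_zero]
    exact (LinearMap.IsIdempotentElem.mem_range_iff hf).mp (Subtype.property _)
  have hr : ∀ j : Fin l, f (c₀ (Sum.inr j)) = 0 := by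
    intro j
    simp only [c₀, Module.Basis.map_apply, Module.Basis.prod_apply, Sum.elim_inr,
      Function.comp_apply, LinearMap.inr_apply, Submodule.coe_prodEquivOfIsCompl',
      ZeroMemClass.coe_zero, zero_add]
    exact LinearMap.mem_ker.mp (Subtype.property _)
  have hfc : ∀ j : Fin n, f (c j) = (if (j : ℕ) < k then (1 : R) else 0) • c j := by
    intro j
    obtain ⟨j, rfl⟩ := (finSumFinEquiv.trans (finCongr hkl)).surjective j
    simp only [c, Module.Basis.reindex_apply, Equiv.symm_apply_apply]
    rcases j with j | j
    · simp [hl]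
    · simp [hr]
  have hD : LinearMap.toMatrix c c f = Matrix.diagProj R n k := by
    ext i j
    rw [LinearMap.toMatrix_apply, hfc, map_smul, Finsupp.smul_apply, Module.Basis.repr_self,
      Matrix.diagProj, Matrix.diagonal_apply]
    by_cases hij : i = j
    · subst hij; simp
    · simp [hij]
  let b := Pi.basisFun R (Fin n)
  refine ⟨k, by omega, ⟨c.toMatrix b, b.toMatrix c, c.toMatrix_mul_toMatrix_flip b,
    b.toMatrix_mul_toMatrix_flip c⟩, ?_⟩
  change E = b.toMatrix c * Matrix.diagProj R n k * c.toMatrix b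
  rw [← hD, basis_toMatrix_mul_linearMap_toMatrix_mul_basis_toMatrix]
  exact (LinearMap.toMatrix'_toLin' E).symm

theorem QRep.exists_isSummandRank_of_isIdempotentElem [IsLocalRing R] (x : QRep G R r)
    {e : ∀ i : G.V, Matrix (Fin (r i)) (Fin (r i)) R} (he : x.IsEndo e)
    (hid : IsIdempotentElem e) :
    ∃ r', IsSummandRank G x r' ∧ ∀ i, (e i).trace = r' i := by
  choose r' hr' g hg using fun i =>
    Matrix.exists_conj_diagProj_of_isIdempotentElem (E := e i) (congrFun hid i)
  refine ⟨r', (isSummandRank_iff x r').mpr ⟨hr', g, ?_⟩, fun i => ?_⟩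
  · rwa [← funext hg]
  · rw [hg i, Matrix.trace_conj_diagProj (hr' i)]

end Summands

section TraceVanishing

open Polynomial UniqueFactorizationMonoid

theorem exists_pow_ne_zero_isIdempotentElem {M : Type*} [Monoid M] [Finite M] (u : M) :
    ∃ N ≠ 0, IsIdempotentElem (u ^ N) := by
  obtain ⟨m, n, hmn, h⟩ := Finite.exists_ne_map_eq_of_infinite fun k : ℕ => u ^ (k + 1)
  wlog hlt : m < n generalizing m n
  · exact this n m hmn.symm h.symm (by omega)
  obtain ⟨d, rfl⟩ := Nat.exists_eq_add_of_lt hlt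
  have hstep : ∀ j i, u ^ (m + 1 + i + j * (d + 1)) = u ^ (m + 1 + i) := by
    intro j i
    induction j with
    | zero => simp
    | succ j ih =>
      rw [← ih, show m + 1 + i + (j + 1) * (d + 1) = (m + d + 1 + 1) + (i + j * (d + 1)) by ring,
        pow_add, ← h, ← pow_add]
      congr 1
      ring
  refine ⟨(m + 1) * (d + 1), by positivity, ?_⟩
  have h1 := hstep (m + 1) ((m + 1) * d)
  rw [IsIdempotentElem, ← pow_add]
  convert h1 using 2 <;> ring

theorem sum_mul_eq_zero_of_cast_eq_zero {ι F : Type*} [Fintype ι] [Ring F] {lam : ι → ℤ}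
    {r m : ι → ℕ} (hchar : ∑ i, (lam i).natAbs * r i < ringChar F) (hm : m ≤ r)
    (h : ∑ i, (lam i : F) * (m i : F) = 0) : ∑ i, lam i * (m i : ℤ) = 0 := by
  have hdvd : (ringChar F : ℤ) ∣ ∑ i, lam i * (m i : ℤ) := by
    rw [← CharP.intCast_eq_zero_iff F]
    push_cast
    exact h
  refine Int.eq_zero_of_abs_lt_dvd hdvd (lt_of_le_of_lt ?_ (Int.ofNat_lt.mpr hchar))
  push_cast
  refine (Finset.abs_sum_le_sum_abs _ _).trans (Finset.sum_le_sum fun i _ => ?_)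
  rw [abs_mul, Nat.abs_cast]
  exact mul_le_mul_of_nonneg_left (by exact_mod_cast hm i) (abs_nonneg _)

/-- If `∑ i, lam i * r' i` vanishes for all ranks `r'` of direct summands, then the weighted trace
of the reduction of any endomorphism vanishes. -/
theorem QRep.sum_mul_trace_eq_zero {G : FinQuiver} {R F : Type} [CommRing R] [IsLocalRing R]
    [Finite R] [Field F] [Algebra F R] (ε : R →ₐ[F] F) {r : G.V → ℕ} {lam : G.V → ℤ}
    (hchar : ∑ i : G.V, (lam i).natAbs * r i < ringChar F) (x : QRep G R r)
    (hx : ∀ r', IsSummandRank G x r' → ∑ i, lam i * (r' i : ℤ) = 0)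
    {e : ∀ i : G.V, Matrix (Fin (r i)) (Fin (r i)) R} (he : e ∈ x.endo F) :
    ∑ i, (lam i : F) * ε (e i).trace = 0 := by
  classical
  let A : ∀ i : G.V, Matrix (Fin (r i)) (Fin (r i)) F := fun i => ε.mapMatrix (e i)
  have htr : ∀ i (M : Matrix (Fin (r i)) (Fin (r i)) R), ε M.trace = (ε.mapMatrix M).trace :=
    fun i M => AddMonoidHom.map_trace (ε : R →+ F) M
  let s : Finset F[X] := Finset.univ.biUnion fun i => (normalizedFactors (A i).charpoly).toFinset
  have hs : ∀ i, (normalizedFactors (A i).charpoly).toFinset ⊆ s :=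
    fun i => Finset.subset_biUnion_of_mem
      (fun i => (normalizedFactors (A i).charpoly).toFinset) (Finset.mem_univ i)
  have hcount : ∀ P ∈ s,
      ∑ i, (lam i : F) * ((normalizedFactors (A i).charpoly).count P : F) = 0 := by
    intro P hP
    obtain ⟨j, -, hj⟩ := Finset.mem_biUnion.mp hP
    rw [Multiset.mem_toFinset] at hj
    have hirr := irreducible_of_normalized_factor P hj
    have hmon := monic_of_mem_normalizedFactors hj
    obtain ⟨N, hN, hid⟩ := exists_pow_ne_zero_isIdempotentElem (aeval e P)
    have hmem : 1 - aeval e P ^ N ∈ x.endo F :=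
      sub_mem (one_mem _) (pow_mem (Algebra.adjoin_le (Set.singleton_subset_iff.mpr he)
        (aeval_mem_adjoin_singleton F e)) N)
    obtain ⟨r', hr', ht⟩ := x.exists_isSummandRank_of_isIdempotentElem hmem hid.one_sub
    have hA : ∀ i, ε.mapMatrix (aeval e P i) = aeval (A i) P := fun i =>
      (Polynomial.aeval_algHom_apply ((ε.mapMatrix (m := Fin (r i))).comp
        (Pi.evalAlgHom F (fun i : G.V => Matrix (Fin (r i)) (Fin (r i)) R) i)) e P).symm
    have hrank : ∀ i, (((normalizedFactors (A i).charpoly).count P * P.natDegree : ℕ) : F)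
        = r' i := by
      intro i
      have hid' : IsIdempotentElem (aeval (A i) P ^ N) := by
        rw [← hA, ← map_pow]
        exact IsIdempotentElem.map (congrFun hid i) ε.mapMatrix
      rw [← Matrix.trace_one_sub_aeval_pow (A i) hirr hmon hN hid', ← hA, ← map_pow,
        ← map_one (ε.mapMatrix (m := Fin (r i))), ← map_sub, ← htr]
      have := ht i
      simp only [Pi.sub_apply, Pi.one_apply, Pi.pow_apply] at this
      rw [this, map_natCast]
    have hzero : ∑ i, lam i *
        (((normalizedFactors (A i).charpoly).count P * P.natDegree : ℕ) : ℤ) = 0 := by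
      refine sum_mul_eq_zero_of_cast_eq_zero (F := F) hchar (fun i => ?_) ?_
      · simpa using (A i).count_normalizedFactors_charpoly_mul_natDegree_le P
      · simp only [hrank]
        have := congrArg (Int.cast : ℤ → F) (hx r' hr')
        push_cast at this
        exact this
    have hdeg : (P.natDegree : ℤ) ≠ 0 := by exact_mod_cast hirr.natDegree_pos.ne'
    have hint : ∑ i, lam i * ((normalizedFactors (A i).charpoly).count P : ℤ) = 0 := by
      refine (mul_eq_zero.mp ?_).resolve_right hdeg
      rw [Finset.sum_mul, ← hzero]
      exact Finset.sum_congr rfl fun i _ => by push_cast; ring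
    have := congrArg (Int.cast : ℤ → F) hint
    push_cast at this
    exact this
  have hterm : ∀ i, (lam i : F) * ε (e i).trace = -∑ P ∈ s,
      ((lam i : F) * ((normalizedFactors (A i).charpoly).count P : F)) * P.nextCoeff := by
    intro i
    rw [htr, (A i).trace_eq_neg_sum_nextCoeff s (hs i), mul_neg, Finset.mul_sum]
    simp only [mul_assoc]
  simp only [hterm, Finset.sum_neg_distrib]
  rw [Finset.sum_comm, neg_eq_zero]
  refine Finset.sum_eq_zero fun P hP => ?_
  rw [← Finset.sum_mul, hcount P hP, zero_mul]

end TraceVanishing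

/-- The lifting criterion over a finite local Frobenius algebra `R` with residue field `F`, where
`τ` spans the socle. -/
theorem exists_momentMap_eq_smul_one_iff {G : FinQuiver} {R F : Type} [CommRing R] [IsLocalRing R]
    [Finite R] [Field F] [Algebra F R] (res : R →ₗ[F] F) (ε : R →ₐ[F] F) (τ : R)
    (hres : ∀ a, (∀ b, res (a * b) = 0) → a = 0) (hτ : ∀ a, res (τ * a) = ε a)
    {r : G.V → ℕ} {lam : G.V → ℤ}
    (hchar : ∑ i : G.V, (lam i).natAbs * r i < ringChar F) (x : QRep G R r) :
    (∃ y : QCoRep G R r, ∀ i : G.V, momentMap G x y i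
        = (τ * ((lam i : ℤ) : R)) • (1 : Matrix (Fin (r i)) (Fin (r i)) R))
      ↔ ∀ r' : G.V → ℕ, IsSummandRank G x r' → ∑ i : G.V, lam i * (r' i : ℤ) = 0 := by
  have : Module.Finite F R := Module.Finite.of_finite
  have hpair : ∀ e : ∀ i : G.V, Matrix (Fin (r i)) (Fin (r i)) R,
      ∑ i, res (e i * (τ * ((lam i : ℤ) : R)) • (1 : Matrix (Fin (r i)) (Fin (r i)) R)).trace
        = ∑ i, (lam i : F) * ε (e i).trace := by
    intro e
    refine Finset.sum_congr rfl fun i _ => ?_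
    rw [Matrix.mul_smul, Matrix.mul_one, Matrix.trace_smul, smul_eq_mul, mul_assoc, hτ, map_mul,
      map_intCast]
  refine (exists_congr fun y => funext_iff.symm).trans ?_
  rw [exists_momentMap_eq_iff hres]
  simp only [hpair]
  constructor
  · intro h r' hr'
    obtain ⟨hle, g, hg⟩ := (isSummandRank_iff x r').mp hr'
    refine sum_mul_eq_zero_of_cast_eq_zero hchar hle ?_
    rw [← h (fun i => (g i)⁻¹.val * Matrix.diagProj R (r i) (r' i) * (g i).val) hg]
    refine Finset.sum_congr rfl fun i _ => ?_
    rw [Matrix.trace_conj_diagProj (hle i), map_natCast]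
  · exact fun h e he => x.sum_mul_trace_eq_zero ε hchar h he

namespace TruncRing

open Polynomial

variable (F : Type) [Field F] (α : ℕ)

/-- The coefficient of `t ^ (α - 1)`, a Frobenius form on `F[t]/(t^α)`. -/
noncomputable def topCoeff (hα : 1 ≤ α) : TruncRing F α →ₗ[F] F :=
  ((Ideal.span {(X : F[X]) ^ α}).restrictScalars F).liftQ (lcoeff F (α - 1)) (by
    intro f hf
    obtain ⟨g, rfl⟩ := Ideal.mem_span_singleton.mp hf
    rw [LinearMap.mem_ker, lcoeff_apply, coeff_X_pow_mul', if_neg (by omega)])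

/-- Reduction modulo `t`. -/
noncomputable def reduction (hα : 1 ≤ α) : TruncRing F α →ₐ[F] F :=
  Ideal.Quotient.liftₐ _ (aeval (0 : F)) (by
    intro f hf
    obtain ⟨g, rfl⟩ := Ideal.mem_span_singleton.mp hf
    simp [show α ≠ 0 by omega])

variable {F α} (hα : 1 ≤ α)

theorem topCoeff_mk (f : F[X]) : topCoeff F α hα (Ideal.Quotient.mk _ f) = f.coeff (α - 1) := rfl

theorem reduction_mk (f : F[X]) : reduction F α hα (Ideal.Quotient.mk _ f) = f.coeff 0 := by
  rw [coeff_zero_eq_aeval_zero]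
  rfl

theorem topCoeff_tvar_pow_mul (a : TruncRing F α) :
    topCoeff F α hα (tvar F α ^ (α - 1) * a) = reduction F α hα a := by
  obtain ⟨f, rfl⟩ := Ideal.Quotient.mk_surjective a
  rw [tvar, ← map_pow, ← map_mul, topCoeff_mk, reduction_mk, coeff_X_pow_mul', if_pos le_rfl,
    Nat.sub_self]

theorem eq_zero_of_forall_topCoeff_mul_eq_zero (a : TruncRing F α)
    (h : ∀ b, topCoeff F α hα (a * b) = 0) : a = 0 := by
  obtain ⟨f, rfl⟩ := Ideal.Quotient.mk_surjective a
  rw [Ideal.Quotient.eq_zero_iff_mem, Ideal.mem_span_singleton, X_pow_dvd_iff]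
  intro d hd
  have := h (Ideal.Quotient.mk _ (X ^ (α - 1 - d)))
  rwa [← map_mul, topCoeff_mk, coeff_mul_X_pow', if_pos (by omega),
    show α - 1 - (α - 1 - d) = d by omega] at this

theorem isLocalRing (hα : 1 ≤ α) : IsLocalRing (TruncRing F α) := by
  have : IsLocalHom (reduction F α hα : TruncRing F α →+* F) := by
    refine ⟨fun a ha => ?_⟩
    obtain ⟨f, rfl⟩ := Ideal.Quotient.mk_surjective a
    have h0 : f.coeff 0 ≠ 0 := by
      rw [← reduction_mk hα]
      exact ha.ne_zero
    have hcop : IsCoprime f (X ^ α) := by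
      refine IsCoprime.pow_right (IsCoprime.symm ?_)
      exact (irreducible_X.coprime_iff_not_dvd).mpr fun hd => h0 (X_dvd_iff.mp hd)
    obtain ⟨u, v, huv⟩ := hcop
    refine IsUnit.of_mul_eq_one (Ideal.Quotient.mk _ u) ?_
    rw [mul_comm, ← map_mul, ← map_one (Ideal.Quotient.mk _), Ideal.Quotient.eq,
      Ideal.mem_span_singleton, ← huv]
    exact ⟨-v, by ring⟩
  exact RingHom.domain_isLocalRing (reduction F α hα : TruncRing F α →+* F)

theorem module_finite : Module.Finite F (TruncRing F α) :=
  (monic_X_pow α).finite_quotient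

end TruncRing

/-- Let `Q` be a finite quiver, `α ≥ 1`, `r ∈ ℕ^{Q₀}`, `λ ∈ ℤ^{Q₀}`, and
`𝔽_q` a finite field of characteristic `p > Σ_i |λ_i| r_i`; set `R := 𝔽_q[t]/(t^α)`.
Let `x` be a locally free representation of rank `r` over `R`.  Then there exists `y`
with `μ(x,y) = (t^{α−1} λ_i · Id)_i` if and only if every rank vector `r'` of a direct
summand of `x` satisfies `Σ_i λ_i r'_i = 0` (as integers). -/
theorem deformed_fibre_lift_criterion (G : FinQuiver) (α : ℕ) (hα : 1 ≤ α)
    (r : G.V → ℕ) (lam : G.V → ℤ)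
    (F : Type) [Field F] [Fintype F]
    (hchar : ∑ i : G.V, (lam i).natAbs * r i < ringChar F)
    (x : QRep G (TruncRing F α) r) :
    (∃ y : QCoRep G (TruncRing F α) r,
        ∀ i : G.V, momentMap G x y i
          = (tvar F α ^ (α - 1) * ((lam i : ℤ) : TruncRing F α)) •
              (1 : Matrix (Fin (r i)) (Fin (r i)) (TruncRing F α)))
      ↔ ∀ r' : G.V → ℕ, IsSummandRank G x r' → ∑ i : G.V, lam i * (r' i : ℤ) = 0 := by
  have := TruncRing.module_finite (F := F) (α := α)
  have : Finite (TruncRing F α) := Module.finite_of_finite F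
  have := TruncRing.isLocalRing (F := F) hα
  exact exists_momentMap_eq_smul_one_iff (TruncRing.topCoeff F α hα) (TruncRing.reduction F α hα)
    (tvar F α ^ (α - 1)) (TruncRing.eq_zero_of_forall_topCoeff_mul_eq_zero hα)
    (TruncRing.topCoeff_tvar_pow_mul hα) hchar x
end

section
/- Assume that ∫_{ℤ_p^{r_A}} ‖Δ_r(x)‖^{−1} dμ(x) < ∞ (the integrand, valued in [0,∞], is finite outside a Haar-null set). Then lim_{n→∞} p^{−n(r_A + r_B − r)} · #{ (a,b) ∈ (ℤ/p^nℤ)^{r_A} × (ℤ/p^nℤ)^{r_B} : θ_n(a)·b = 0 } = ∫_{ℤ_p^{r_A}} ‖Δ_r(x)‖^{−1} dμ(x). -/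
open MeasureTheory

noncomputable instance (p : ℕ) [Fact p.Prime] : MeasurableSpace ℤ_[p] := borel _
instance (p : ℕ) [Fact p.Prime] : BorelSpace ℤ_[p] := ⟨rfl⟩

/-- The Haar probability measure on the compact additive group `ℤ_p`. -/
noncomputable def padicHaar (p : ℕ) [Fact p.Prime] : Measure ℤ_[p] :=
  Measure.addHaarMeasure ⟨⟨Set.univ, isCompact_univ⟩, by simp⟩

/-- The Haar probability measure on `ℤ_p^N` (product of the Haar probability measures on
the factors). -/
noncomputable def padicHaarPi (p : ℕ) [Fact p.Prime] (N : ℕ) :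
    Measure (Fin N → ℤ_[p]) :=
  Measure.pi fun _ => padicHaar p

/-- `‖Δ_i(A)‖`: the maximum of the `p`-adic absolute values of all `i × i` minors of the
matrix `A` (with the conventions `‖Δ_0(A)‖ = 1`, and `‖Δ_i(A)‖ = 0` when `i` exceeds the
size of `A`). -/
noncomputable def minorNorm {p : ℕ} [Fact p.Prime] {m n : ℕ}
    (A : Matrix (Fin m) (Fin n) ℤ_[p]) (i : ℕ) : ℝ :=
  ⨆ ρ : (Fin i → Fin m) × (Fin i → Fin n), ‖(A.submatrix ρ.1 ρ.2).det‖

/-- The number of pairs `(a,b) ∈ (ℤ/p^nℤ)^{r_A} × (ℤ/p^nℤ)^{r_B}` with `θ_n(a)·b = 0`,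
where `θ_n` is the map induced by `θ` modulo `p^n` (computed via lifts, on which it does
not depend). -/
noncomputable def solCount (p : ℕ) [Fact p.Prime] {rA rB rC : ℕ}
    (θ : (Fin rA → ℤ_[p]) →ₗ[ℤ_[p]] Matrix (Fin rC) (Fin rB) ℤ_[p]) (n : ℕ) : ℕ :=
  Nat.card {ab : (Fin rA → ZMod (p ^ n)) × (Fin rB → ZMod (p ^ n)) //
    ∀ k : Fin rC,
      PadicInt.toZModPow n
        ((θ fun j => ((ab.1 j).val : ℤ_[p])).mulVec (fun j => ((ab.2 j).val : ℤ_[p])) k)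
        = 0}


theorem PadicInt.toZModPow_surjective (p : ℕ) [Fact p.Prime] (n : ℕ) :
    Function.Surjective (PadicInt.toZModPow n : ℤ_[p] →+* ZMod (p ^ n)) :=
  ZMod.ringHom_surjective _

theorem PadicInt.card_quotient_span_singleton {p : ℕ} [Fact p.Prime] {a : ℤ_[p]} (ha : a ≠ 0) :
    (Nat.card (ℤ_[p] ⧸ Ideal.span {a}) : ℝ) = ‖a‖⁻¹ := by
  have hspan : Ideal.span {a} = RingHom.ker (PadicInt.toZModPow a.valuation) := by
    rw [PadicInt.ker_toZModPow, Ideal.span_singleton_eq_span_singleton]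
    refine (Associated.symm ⟨PadicInt.unitCoeff ha, ?_⟩)
    rw [mul_comm, ← PadicInt.unitCoeff_spec ha]
  rw [hspan, Nat.card_congr
    (RingHom.quotientKerEquivOfSurjective (PadicInt.toZModPow_surjective p _)).toEquiv,
    Nat.card_zmod, PadicInt.norm_eq_zpow_neg_valuation ha]
  simp

/-- The cokernel of an injective endomorphism of `ℤ_p^r` has `‖det‖⁻¹` elements. -/
theorem PadicInt.card_quotient_range_mulVecLin {p : ℕ} [Fact p.Prime] {r : ℕ}
    {M : Matrix (Fin r) (Fin r) ℤ_[p]} (hM : M.det ≠ 0) :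
    (Nat.card ((Fin r → ℤ_[p]) ⧸ LinearMap.range M.mulVecLin) : ℝ) = ‖M.det‖⁻¹ := by
  have hinj : Function.Injective M.mulVecLin := by
    rw [← LinearMap.ker_eq_bot, Matrix.ker_mulVecLin_eq_bot_iff]
    intro v hv
    exact Matrix.eq_zero_of_mulVec_eq_zero hM hv
  let E := LinearEquiv.ofInjective M.mulVecLin hinj
  have hrank : Module.finrank ℤ_[p] (LinearMap.range M.mulVecLin)
      = Module.finrank ℤ_[p] (Fin r → ℤ_[p]) := E.symm.finrank_eq
  let b := Pi.basisFun ℤ_[p] (Fin r)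
  let a := Submodule.smithNormalFormCoeffs b hrank
  let b' := Submodule.smithNormalFormTopBasis b hrank
  let ab := Submodule.smithNormalFormBotBasis b hrank
  have ha : ∀ i, a i ≠ 0 := Submodule.smithNormalFormCoeffs_ne_zero b hrank
  have hassoc : Associated M.det (∏ i, a i) := by
    have h1 : LinearMap.det M.mulVecLin = M.det := LinearMap.det_toLin' M
    have h2 : LinearMap.det (Matrix.toLin b' b' (Matrix.diagonal a)) = ∏ i, a i := by
      rw [LinearMap.det_toLin, Matrix.det_diagonal]
    rw [← h1, ← h2]
    let e := (b'.equiv ab (Equiv.refl _)).trans E.symm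
    refine (LinearMap.associated_det_of_eq_comp e _ _ fun x => ?_).symm
    suffices h : Matrix.toLin b' b' (Matrix.diagonal a) = M.mulVecLin ∘ₗ e.toLinearMap from
      LinearMap.congr_fun h x
    refine b'.ext fun i => ?_
    have h3 : M.mulVecLin (E.symm (ab i)) = (ab i : Fin r → ℤ_[p]) :=
      congrArg Subtype.val (E.apply_symm_apply (ab i))
    have h4 : (ab i : Fin r → ℤ_[p]) = a i • b' i :=
      Submodule.smithNormalFormBotBasis_def b hrank i
    rw [Matrix.toLin_self]
    simp only [LinearMap.comp_apply, LinearEquiv.coe_coe, e, LinearEquiv.trans_apply,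
      Module.Basis.equiv_apply, Equiv.refl_apply, h3, h4]
    rw [Finset.sum_eq_single i]
    · simp
    · intro j _ hj
      simp [Matrix.diagonal_apply_ne _ hj]
    · simp
  obtain ⟨u, hu⟩ := hassoc
  rw [Nat.card_congr (Submodule.quotientEquivPiSpan _ b hrank).toEquiv, Nat.card_pi,
    Nat.cast_prod]
  have hn : ‖M.det‖ = ∏ i, ‖a i‖ := by
    rw [← norm_prod, ← hu, norm_mul, PadicInt.norm_units, mul_one]
  rw [hn, ← Finset.prod_inv_distrib]
  exact Finset.prod_congr rfl fun i _ => PadicInt.card_quotient_span_singleton (ha i)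

theorem Matrix.mulVec_map_comp {R S : Type*} [CommRing R] [CommRing S] (φ : R →+* S) {m n : ℕ}
    (A : Matrix (Fin m) (Fin n) R) (v : Fin n → R) :
    (A.map φ).mulVec (φ ∘ v) = φ ∘ A.mulVec v := by
  ext i
  simp [Matrix.mulVec, dotProduct]

/-- Factors with one-sided inverses change the size of the kernel of a square matrix only by the
number of free variables. -/
theorem Matrix.card_ker_mul_mul {R : Type*} [CommRing R] [Finite R] {m k r : ℕ}
    {L : Matrix (Fin m) (Fin r) R} {M : Matrix (Fin r) (Fin r) R} {N : Matrix (Fin r) (Fin k) R}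
    {T : Matrix (Fin r) (Fin m) R} {S : Matrix (Fin k) (Fin r) R}
    (hL : T * L = 1) (hN : N * S = 1) :
    Nat.card (LinearMap.ker (L * M * N).mulVecLin) * Nat.card R ^ r =
      Nat.card (LinearMap.ker M.mulVecLin) * Nat.card R ^ k := by
  have hsurj : Function.Surjective N.mulVecLin.toAddMonoidHom := fun v =>
    ⟨S.mulVec v, by simp [Matrix.mulVec_mulVec, hN]⟩
  have hker : (LinearMap.ker (L * M * N).mulVecLin).toAddSubgroup =
      (LinearMap.ker M.mulVecLin).toAddSubgroup.comap N.mulVecLin.toAddMonoidHom := by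
    ext v
    simp only [Submodule.mem_toAddSubgroup, LinearMap.mem_ker, Matrix.mulVecLin_apply,
      AddSubgroup.mem_comap, LinearMap.toAddMonoidHom_coe, ← Matrix.mulVec_mulVec]
    refine ⟨fun h => ?_, fun h => by rw [h, Matrix.mulVec_zero]⟩
    have := congrArg T.mulVec h
    rwa [Matrix.mulVec_mulVec, hL, Matrix.one_mulVec, Matrix.mulVec_zero] at this
  have hidx := AddSubgroup.index_comap_of_surjective
    (LinearMap.ker M.mulVecLin).toAddSubgroup hsurj
  rw [← hker] at hidx
  have h1 := (LinearMap.ker (L * M * N).mulVecLin).toAddSubgroup.card_mul_index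
  have h2 := (LinearMap.ker M.mulVecLin).toAddSubgroup.card_mul_index
  rw [hidx] at h1
  have hne : (LinearMap.ker M.mulVecLin).toAddSubgroup.index ≠ 0 :=
    AddSubgroup.FiniteIndex.index_ne_zero
  simp only [Nat.card_fun, Nat.card_eq_fintype_card (α := Fin _), Fintype.card_fin] at h1 h2
  change Nat.card (LinearMap.ker (L * M * N).mulVecLin) * _ = _ at h1
  change Nat.card (LinearMap.ker M.mulVecLin) * _ = _ at h2
  rw [← h1, ← h2]
  ring

theorem AddMonoidHom.card_ker_eq_index_range {G : Type*} [AddCommGroup G] [Finite G] (f : G →+ G) :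
    Nat.card f.ker = f.range.index := AddSubgroup.index_range.symm

section SquareKernel

variable {p : ℕ} [Fact p.Prime] {r : ℕ} {M : Matrix (Fin r) (Fin r) ℤ_[p]}

theorem PadicInt.index_range_mulVecLin (hM : M.det ≠ 0) :
    ((LinearMap.range M.mulVecLin).toAddSubgroup.index : ℝ) = ‖M.det‖⁻¹ :=
  PadicInt.card_quotient_range_mulVecLin hM

theorem PadicInt.card_ker_map_toZModPow_eq_index (n : ℕ) :
    Nat.card (LinearMap.ker (M.map (PadicInt.toZModPow n)).mulVecLin) =
      ((LinearMap.range M.mulVecLin).toAddSubgroup.map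
        ((PadicInt.toZModPow n).toAddMonoidHom.compLeft (Fin r))).index := by
  have := AddMonoidHom.card_ker_eq_index_range
    (M.map (PadicInt.toZModPow n)).mulVecLin.toAddMonoidHom
  refine this.trans (congrArg _ ?_)
  ext w
  simp only [AddMonoidHom.mem_range, AddSubgroup.mem_map, Submodule.mem_toAddSubgroup,
    LinearMap.mem_range]
  constructor
  · rintro ⟨v, rfl⟩
    choose x hx using fun i => PadicInt.toZModPow_surjective p n (v i)
    obtain rfl : PadicInt.toZModPow n ∘ x = v := funext hx
    exact ⟨_, ⟨x, rfl⟩, (Matrix.mulVec_map_comp (PadicInt.toZModPow n) M x).symm⟩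
  · rintro ⟨_, ⟨x, rfl⟩, rfl⟩
    exact ⟨PadicInt.toZModPow n ∘ x, Matrix.mulVec_map_comp _ M x⟩

theorem PadicInt.compLeft_toZModPow_surjective (n r : ℕ) : Function.Surjective
    ((PadicInt.toZModPow (p := p) n).toAddMonoidHom.compLeft (Fin r)) := fun v => by
  choose x hx using fun i => PadicInt.toZModPow_surjective p n (v i)
  exact ⟨x, funext hx⟩

theorem PadicInt.card_ker_map_toZModPow_le (hM : M.det ≠ 0) (n : ℕ) :
    (Nat.card (LinearMap.ker (M.map (PadicInt.toZModPow n)).mulVecLin) : ℝ) ≤ ‖M.det‖⁻¹ := by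
  rw [PadicInt.card_ker_map_toZModPow_eq_index, ← PadicInt.index_range_mulVecLin hM]
  have hpos : 0 < ((LinearMap.range M.mulVecLin).toAddSubgroup.index : ℝ) := by
    rw [PadicInt.index_range_mulVecLin hM]
    exact inv_pos.2 (norm_pos_iff.2 hM)
  exact_mod_cast Nat.le_of_dvd (by exact_mod_cast hpos)
    (AddSubgroup.index_map_dvd _ (PadicInt.compLeft_toZModPow_surjective n r))

theorem PadicInt.card_ker_map_toZModPow_eq (hM : M.det ≠ 0) {n : ℕ} (hn : M.det ∣ (p : ℤ_[p]) ^ n) :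
    (Nat.card (LinearMap.ker (M.map (PadicInt.toZModPow n)).mulVecLin) : ℝ) = ‖M.det‖⁻¹ := by
  rw [PadicInt.card_ker_map_toZModPow_eq_index, ← PadicInt.index_range_mulVecLin hM,
    AddSubgroup.index_map_eq _ (PadicInt.compLeft_toZModPow_surjective n r)]
  intro x hx
  have hdvd : ∀ i, M.det ∣ x i := fun i => by
    have h : PadicInt.toZModPow n (x i) = 0 := congrFun hx i
    rw [← RingHom.mem_ker, PadicInt.ker_toZModPow, Ideal.mem_span_singleton] at h
    exact hn.trans h
  choose z hz using hdvd
  refine ⟨M.adjugate.mulVec z, ?_⟩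
  rw [Matrix.mulVecLin_apply, Matrix.mulVec_mulVec, Matrix.mul_adjugate, Matrix.smul_mulVec,
    Matrix.one_mulVec]
  exact funext fun i => (hz i).symm

theorem PadicInt.eventually_dvd_pow {d : ℤ_[p]} (hd : d ≠ 0) :
    ∀ᶠ n in Filter.atTop, d ∣ (p : ℤ_[p]) ^ n := by
  filter_upwards [Filter.eventually_ge_atTop d.valuation] with n hn
  refine dvd_trans ?_ (pow_dvd_pow _ hn)
  refine ⟨((PadicInt.unitCoeff hd)⁻¹ : ℤ_[p]ˣ), ?_⟩
  rw [Units.eq_mul_inv_iff_mul_eq, mul_comm]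
  exact (PadicInt.unitCoeff_spec hd).symm

end SquareKernel

section MaximalMinor

variable {R : Type*} [CommRing R] [IsDomain R] {m k r : ℕ}

theorem Matrix.mul_left_cancel_of_det_ne_zero {M : Matrix (Fin r) (Fin r) R} (hM : M.det ≠ 0)
    {X Y : Matrix (Fin r) (Fin k) R} (h : M * X = M * Y) : X = Y := by
  have h' := congrArg (M.adjugate * ·) h
  simp only [← Matrix.mul_assoc, Matrix.adjugate_mul, Matrix.smul_mul, Matrix.one_mul] at h'
  exact smul_right_injective _ hM h'

/-- Cramer's rule over a domain, when all the quotients of determinants are integral. -/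
theorem Matrix.exists_mul_eq_of_dvd {M : Matrix (Fin r) (Fin r) R} (hM : M.det ≠ 0)
    {B : Matrix (Fin r) (Fin k) R}
    (h : ∀ i j, M.det ∣ (M.updateCol i (fun l => B l j)).det) :
    ∃ N : Matrix (Fin r) (Fin k) R, M * N = B := by
  choose N hN using h
  refine ⟨Matrix.of N, ?_⟩
  have h1 : M.adjugate * B = M.det • Matrix.of N := by
    ext i j
    rw [Matrix.smul_apply, Matrix.of_apply, smul_eq_mul, ← hN, ← Matrix.cramer_apply,
      Matrix.cramer_eq_adjugate_mulVec]
    rfl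
  have h2 := congrArg (M * ·) h1
  simp only [← Matrix.mul_assoc, Matrix.mul_adjugate, Matrix.smul_mul, Matrix.one_mul,
    Matrix.mul_smul] at h2
  exact (smul_right_injective _ hM h2).symm

/-- If a nonzero `r × r` minor of `A` divides all the others and all the `(r + 1) × (r + 1)` minors
vanish, then `A` factors through the corresponding square submatrix, by matrices which have
one-sided inverses. -/
theorem Matrix.exists_factorization_of_minor {A : Matrix (Fin m) (Fin k) R} {I : Fin r → Fin m}
    {J : Fin r → Fin k} (hM : (A.submatrix I J).det ≠ 0)
    (hdvd : ∀ (I' : Fin r → Fin m) (J' : Fin r → Fin k),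
      (A.submatrix I J).det ∣ (A.submatrix I' J').det)
    (hzero : ∀ (I' : Fin (r + 1) → Fin m) (J' : Fin (r + 1) → Fin k),
      (A.submatrix I' J').det = 0) :
    ∃ (L : Matrix (Fin m) (Fin r) R) (N : Matrix (Fin r) (Fin k) R) (T : Matrix (Fin r) (Fin m) R)
      (S : Matrix (Fin k) (Fin r) R), T * L = 1 ∧ N * S = 1 ∧ A = L * A.submatrix I J * N := by
  obtain ⟨N, hN⟩ : ∃ N : Matrix (Fin r) (Fin k) R, A.submatrix I J * N = A.submatrix I id := by
    refine Matrix.exists_mul_eq_of_dvd hM fun i j => ?_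
    convert hdvd I (Function.update J i j) using 2
    ext a b
    simp only [Matrix.updateCol_apply, Matrix.submatrix_apply, Function.update_apply, id]
    split_ifs <;> rfl
  obtain ⟨L', hL'⟩ : ∃ L' : Matrix (Fin r) (Fin m) R,
      (A.submatrix I J).transpose * L' = (A.submatrix id J).transpose := by
    refine Matrix.exists_mul_eq_of_dvd (by rwa [Matrix.det_transpose]) fun i j => ?_
    rw [Matrix.det_transpose, Matrix.updateCol_transpose, Matrix.det_transpose]
    convert hdvd (Function.update I i j) J using 2
    ext a b
    simp only [Matrix.updateRow_apply, Matrix.submatrix_apply, Function.update_apply, id,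
      Matrix.transpose_apply]
    split_ifs <;> rfl
  have hL : L'.transpose * A.submatrix I J = A.submatrix id J := by
    rw [← Matrix.transpose_inj, Matrix.transpose_mul, Matrix.transpose_transpose, hL']
  refine ⟨L'.transpose, N, (1 : Matrix (Fin m) (Fin m) R).submatrix I id,
    (1 : Matrix (Fin k) (Fin k) R).submatrix id J, ?_, ?_, ?_⟩
  · have h : L'.submatrix id I = 1 := by
      refine Matrix.mul_left_cancel_of_det_ne_zero (M := (A.submatrix I J).transpose)
        (by rwa [Matrix.det_transpose]) ?_
      rw [Matrix.mul_one]
      exact congrArg (fun X => X.submatrix id I) hL'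
    rw [← Matrix.transpose_inj, Matrix.transpose_mul, Matrix.transpose_transpose,
      Matrix.transpose_one, ← h]
    ext a b
    simp [Matrix.mul_apply, Matrix.one_apply]
  · have h : N.submatrix id J = 1 := by
      refine Matrix.mul_left_cancel_of_det_ne_zero hM ?_
      rw [Matrix.mul_one]
      exact congrArg (fun X => X.submatrix id J) hN
    rw [← h]
    ext a b
    simp [Matrix.mul_apply, Matrix.one_apply]
  · ext i j
    let row : Matrix (Fin 1) (Fin r) R := L'.transpose.submatrix (fun _ => i) id
    let col : Matrix (Fin r) (Fin 1) R := N.submatrix id (fun _ => j)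
    let M := A.submatrix I J
    let W : Matrix (Fin 1) (Fin 1) R := Matrix.of fun _ _ => A i j
    have hblock : A.submatrix (Sum.elim I fun _ : Fin 1 => i) (Sum.elim J fun _ : Fin 1 => j) =
        Matrix.fromBlocks 1 0 row 1 * Matrix.fromBlocks M (M * col) 0 (W - row * M * col) := by
      rw [Matrix.fromBlocks_multiply]
      simp only [Matrix.one_mul, Matrix.zero_mul, add_zero, ← Matrix.mul_assoc, add_sub_cancel]
      have hcol : ∀ a, (M * col) a 0 = A (I a) j := fun a => congrFun (congrFun hN a) j
      have hrow : ∀ b, (row * M) 0 b = A i (J b) := fun b => congrFun (congrFun hL i) b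
      ext (a | a) (b | b)
      · rfl
      · obtain rfl := Subsingleton.elim b 0
        exact (hcol a).symm
      · obtain rfl := Subsingleton.elim a 0
        exact (hrow b).symm
      · rfl
    have hdet := hzero ((Sum.elim I fun _ : Fin 1 => i) ∘ finSumFinEquiv.symm)
      ((Sum.elim J fun _ : Fin 1 => j) ∘ finSumFinEquiv.symm)
    rw [← Matrix.submatrix_submatrix, Matrix.det_submatrix_equiv_self, hblock, Matrix.det_mul,
      Matrix.det_fromBlocks_zero₁₂, Matrix.det_fromBlocks_zero₂₁, Matrix.det_one, Matrix.det_one,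
      one_mul, one_mul, mul_eq_zero] at hdet
    have hentry := hdet.resolve_left hM
    rw [Matrix.det_unique] at hentry
    exact sub_eq_zero.1 hentry

end MaximalMinor

section MinorNorm

variable {p : ℕ} [Fact p.Prime] {m k r : ℕ} {A : Matrix (Fin m) (Fin k) ℤ_[p]}

theorem norm_det_submatrix_le_minorNorm (A : Matrix (Fin m) (Fin k) ℤ_[p]) (I : Fin r → Fin m)
    (J : Fin r → Fin k) : ‖(A.submatrix I J).det‖ ≤ minorNorm A r :=
  le_ciSup (f := fun ρ : (Fin r → Fin m) × (Fin r → Fin k) => ‖(A.submatrix ρ.1 ρ.2).det‖)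
    (Set.finite_range _).bddAbove (I, J)

theorem exists_norm_det_submatrix_eq_minorNorm (h : minorNorm A r ≠ 0) :
    ∃ (I : Fin r → Fin m) (J : Fin r → Fin k), ‖(A.submatrix I J).det‖ = minorNorm A r := by
  cases isEmpty_or_nonempty ((Fin r → Fin m) × (Fin r → Fin k)) with
  | inl hE => exact absurd (Real.iSup_of_isEmpty _) h
  | inr hE =>
    obtain ⟨ρ, hρ⟩ := exists_eq_ciSup_of_finite
      (f := fun ρ : (Fin r → Fin m) × (Fin r → Fin k) => ‖(A.submatrix ρ.1 ρ.2).det‖)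
    exact ⟨ρ.1, ρ.2, hρ⟩

theorem PadicInt.dvd_of_norm_le {a b : ℤ_[p]} (h : ‖b‖ ≤ ‖a‖) : a ∣ b := by
  rcases eq_or_ne a 0 with rfl | ha
  · rw [norm_zero, norm_le_zero_iff] at h
    rw [h]
  have hn : ‖(b : ℚ_[p]) / a‖ ≤ 1 := by
    rw [norm_div]
    exact div_le_one_of_le₀ h (norm_nonneg _)
  refine ⟨⟨_, hn⟩, PadicInt.ext ?_⟩
  exact (mul_div_cancel₀ _ (PadicInt.coe_ne_zero.2 ha)).symm

/-- The number of solutions of `A b = 0` modulo `p ^ n`, normalized by `p ^ (n (k - r))`. -/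
noncomputable def normalizedKerCard (A : Matrix (Fin m) (Fin k) ℤ_[p]) (r n : ℕ) : ℝ :=
  (p : ℝ) ^ (-(n : ℤ) * ((k : ℤ) - (r : ℤ))) *
    (Nat.card (LinearMap.ker (A.map (PadicInt.toZModPow n)).mulVecLin) : ℝ)

/-- For a matrix of rank `r`, the normalized number of solutions modulo `p ^ n` is the size of the
kernel modulo `p ^ n` of a square matrix whose determinant is an `r × r` minor of maximal norm. -/
theorem exists_normalizedKerCard_eq (h : minorNorm A r ≠ 0) (h' : minorNorm A (r + 1) = 0) :
    ∃ M : Matrix (Fin r) (Fin r) ℤ_[p], M.det ≠ 0 ∧ ‖M.det‖ = minorNorm A r ∧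
      ∀ n, normalizedKerCard A r n =
        (Nat.card (LinearMap.ker (M.map (PadicInt.toZModPow n)).mulVecLin) : ℝ) := by
  obtain ⟨I, J, hIJ⟩ := exists_norm_det_submatrix_eq_minorNorm h
  have hM : (A.submatrix I J).det ≠ 0 := norm_ne_zero_iff.1 (hIJ ▸ h)
  obtain ⟨L, N, T, S, hL, hN, hA⟩ := Matrix.exists_factorization_of_minor hM
    (fun I' J' => PadicInt.dvd_of_norm_le (hIJ ▸ norm_det_submatrix_le_minorNorm A I' J'))
    (fun I' J' => norm_le_zero_iff.1 (h' ▸ norm_det_submatrix_le_minorNorm A I' J'))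
  generalize A.submatrix I J = M at *
  refine ⟨M, hM, hIJ, fun n => ?_⟩
  have hcard := Matrix.card_ker_mul_mul (M := M.map (PadicInt.toZModPow n))
    (L := L.map (PadicInt.toZModPow n)) (N := N.map (PadicInt.toZModPow n))
    (T := T.map (PadicInt.toZModPow n)) (S := S.map (PadicInt.toZModPow n))
    (by rw [← Matrix.map_mul, hL, Matrix.map_one _ (map_zero _) (map_one _)])
    (by rw [← Matrix.map_mul, hN, Matrix.map_one _ (map_zero _) (map_one _)])
  rw [← Matrix.map_mul, ← Matrix.map_mul, ← hA, Nat.card_zmod] at hcard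
  have hp : (p : ℝ) ≠ 0 := Nat.cast_ne_zero.2 (Fact.out : p.Prime).ne_zero
  have hcard' : (Nat.card (LinearMap.ker (A.map (PadicInt.toZModPow n)).mulVecLin) : ℝ) *
      (p : ℝ) ^ ((n : ℤ) * r) =
      (Nat.card (LinearMap.ker (M.map (PadicInt.toZModPow n)).mulVecLin) : ℝ) *
        (p : ℝ) ^ ((n : ℤ) * k) := by
    have := congrArg (Nat.cast : ℕ → ℝ) hcard
    push_cast [← pow_mul] at this
    exact_mod_cast this
  rw [normalizedKerCard, show (-(n : ℤ) * ((k : ℤ) - (r : ℤ))) = n * r - n * k by ring,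
    zpow_sub₀ hp, div_mul_eq_mul_div, mul_comm, hcard', mul_div_assoc,
    div_self (zpow_ne_zero _ hp), mul_one]

theorem normalizedKerCard_le (h : minorNorm A r ≠ 0) (h' : minorNorm A (r + 1) = 0) (n : ℕ) :
    normalizedKerCard A r n ≤ (minorNorm A r)⁻¹ := by
  obtain ⟨M, hM, hdet, hcard⟩ := exists_normalizedKerCard_eq h h'
  rw [hcard, ← hdet]
  exact PadicInt.card_ker_map_toZModPow_le hM n

theorem tendsto_normalizedKerCard (h : minorNorm A r ≠ 0) (h' : minorNorm A (r + 1) = 0) :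
    Filter.Tendsto (normalizedKerCard A r) Filter.atTop (nhds (minorNorm A r)⁻¹) := by
  obtain ⟨M, hM, hdet, hcard⟩ := exists_normalizedKerCard_eq h h'
  refine tendsto_const_nhds.congr' ?_
  filter_upwards [PadicInt.eventually_dvd_pow hM] with n hn
  rw [hcard, ← hdet, PadicInt.card_ker_map_toZModPow_eq hM hn]

end MinorNorm

section Measure

variable {p : ℕ} [Fact p.Prime]

instance : (padicHaar p).IsAddHaarMeasure :=
  inferInstanceAs (Measure.addHaarMeasure _).IsAddHaarMeasure

instance : IsProbabilityMeasure (padicHaar p) :=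
  ⟨Measure.addHaarMeasure_self (K₀ := ⟨⟨Set.univ, isCompact_univ⟩, by simp⟩)⟩

theorem PadicInt.measurable_toZModPow (n : ℕ) :
    Measurable (PadicInt.toZModPow n : ℤ_[p] → ZMod (p ^ n)) := by
  refine measurable_to_countable' fun a => ?_
  obtain ⟨y, rfl⟩ := PadicInt.toZModPow_surjective p n a
  have : PadicInt.toZModPow n ⁻¹' {PadicInt.toZModPow n y} =
      Metric.closedBall y ((p : ℝ) ^ (-n : ℤ)) := by
    ext x
    rw [Set.mem_preimage, Set.mem_singleton_iff, ← sub_eq_zero, ← map_sub, ← RingHom.mem_ker,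
      PadicInt.ker_toZModPow, mem_closedBall_iff_norm, PadicInt.norm_le_pow_iff_mem_span_pow]
  rw [this]
  exact Metric.isClosed_closedBall.measurableSet

theorem padicHaar_preimage_toZModPow (n : ℕ) (a : ZMod (p ^ n)) :
    padicHaar p (PadicInt.toZModPow n ⁻¹' {a}) = ((p : ENNReal) ^ n)⁻¹ := by
  have htrans : ∀ b : ZMod (p ^ n), padicHaar p (PadicInt.toZModPow n ⁻¹' {b}) =
      padicHaar p (PadicInt.toZModPow n ⁻¹' {a}) := fun b => by
    obtain ⟨y, hy⟩ := PadicInt.toZModPow_surjective p n (b - a)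
    rw [← measure_preimage_add (padicHaar p) y (PadicInt.toZModPow n ⁻¹' {b})]
    congr 1
    ext x
    simp only [Set.mem_preimage, Set.mem_singleton_iff, map_add, hy]
    constructor <;> intro h
    · linear_combination h
    · rw [h, sub_add_cancel]
  have hsum := sum_measure_preimage_singleton (μ := padicHaar p)
    (Finset.univ : Finset (ZMod (p ^ n))) (f := PadicInt.toZModPow n)
    fun b _ => PadicInt.measurable_toZModPow n (measurableSet_singleton b)
  rw [Finset.sum_congr rfl fun b _ => htrans b, Finset.coe_univ, Set.preimage_univ, measure_univ,
    Finset.sum_const, Finset.card_univ, ZMod.card, nsmul_eq_mul, mul_comm, Nat.cast_pow] at hsum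
  exact ENNReal.eq_inv_of_mul_eq_one_left hsum

theorem padicHaarPi_preimage_toZModPow (N n : ℕ) (a : Fin N → ZMod (p ^ n)) :
    padicHaarPi p N ((fun x j => PadicInt.toZModPow n (x j)) ⁻¹' {a}) =
      ((p : ENNReal) ^ (n * N))⁻¹ := by
  have : (fun (x : Fin N → ℤ_[p]) j => PadicInt.toZModPow n (x j)) ⁻¹' {a} =
      Set.univ.pi fun j => PadicInt.toZModPow n ⁻¹' {a j} := by
    ext x
    simp [funext_iff]
  rw [this, padicHaarPi, Measure.pi_pi]
  simp [padicHaar_preimage_toZModPow, pow_mul, ENNReal.inv_pow]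

theorem measurable_comp_toZModPow (N n : ℕ) :
    Measurable fun (x : Fin N → ℤ_[p]) j => PadicInt.toZModPow n (x j) :=
  measurable_pi_lambda _ fun j => (PadicInt.measurable_toZModPow n).comp (measurable_pi_apply j)

theorem lintegral_padicHaarPi_comp_toZModPow (N n : ℕ) (G : (Fin N → ZMod (p ^ n)) → ENNReal) :
    ∫⁻ x, G (fun j => PadicInt.toZModPow n (x j)) ∂(padicHaarPi p N) =
      ((p : ENNReal) ^ (n * N))⁻¹ * ∑ a, G a := by
  have hm := measurable_comp_toZModPow (p := p) N n
  rw [← lintegral_map (f := G) (Measurable.of_discrete) hm, lintegral_fintype, Finset.mul_sum]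
  refine Finset.sum_congr rfl fun a _ => ?_
  rw [Measure.map_apply hm (measurableSet_singleton a), padicHaarPi_preimage_toZModPow, mul_comm]

end Measure

section Family

variable {p : ℕ} [Fact p.Prime] {rA rB rC : ℕ}
  (θ : (Fin rA → ℤ_[p]) →ₗ[ℤ_[p]] Matrix (Fin rC) (Fin rB) ℤ_[p])

theorem PadicInt.toZModPow_natCast_val (n : ℕ) (a : ZMod (p ^ n)) :
    PadicInt.toZModPow n ((a.val : ℕ) : ℤ_[p]) = a := by
  rw [map_natCast, ZMod.natCast_zmod_val]

theorem map_toZModPow_congr {n : ℕ} {x y : Fin rA → ℤ_[p]}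
    (h : ∀ j, PadicInt.toZModPow n (x j) = PadicInt.toZModPow n (y j)) :
    (θ x).map (PadicInt.toZModPow n) = (θ y).map (PadicInt.toZModPow n) := by
  have hdvd : ∀ j, (p : ℤ_[p]) ^ n ∣ (x - y) j := fun j => by
    rw [← Ideal.mem_span_singleton, ← PadicInt.ker_toZModPow, RingHom.mem_ker, Pi.sub_apply,
      map_sub, h, sub_self]
  choose z hz using hdvd
  have hxy : x = y + (p : ℤ_[p]) ^ n • z := by
    rw [← sub_eq_iff_eq_add']
    exact funext hz
  have hp : PadicInt.toZModPow n ((p : ℤ_[p]) ^ n) = 0 := by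
    rw [← RingHom.mem_ker, PadicInt.ker_toZModPow]
    exact Ideal.mem_span_singleton_self _
  ext i j
  rw [hxy, map_add, map_smul]
  simp only [Matrix.map_apply, Matrix.add_apply, Matrix.smul_apply, smul_eq_mul, map_add, map_mul,
    hp, zero_mul, add_zero]

theorem solCount_eq_sum (n : ℕ) :
    solCount p θ n = ∑ a : Fin rA → ZMod (p ^ n), Nat.card (LinearMap.ker
      ((θ fun j => ((a j).val : ℤ_[p])).map (PadicInt.toZModPow n)).mulVecLin) := by
  rw [solCount, Nat.card_congr (Equiv.subtypeProdEquivSigmaSubtype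
    fun (a : Fin rA → ZMod (p ^ n)) (b : Fin rB → ZMod (p ^ n)) => ∀ k : Fin rC,
      PadicInt.toZModPow n
        ((θ fun j => ((a j).val : ℤ_[p])).mulVec (fun j => ((b j).val : ℤ_[p])) k) = 0),
    Nat.card_sigma]
  refine Finset.sum_congr rfl fun a _ => Nat.card_congr (Equiv.subtypeEquivRight fun b => ?_)
  have hb : PadicInt.toZModPow n ∘ (fun j => ((b j).val : ℤ_[p])) = b :=
    funext fun j => PadicInt.toZModPow_natCast_val n (b j)
  rw [LinearMap.mem_ker, Matrix.mulVecLin_apply]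
  conv_rhs => rw [← hb, Matrix.mulVec_map_comp]
  exact funext_iff.symm

theorem normalizedKerCard_nonneg {m k : ℕ} (A : Matrix (Fin m) (Fin k) ℤ_[p]) (r n : ℕ) :
    0 ≤ normalizedKerCard A r n := by
  unfold normalizedKerCard
  positivity

theorem normalizedKerCard_eq_lift (r n : ℕ) (x : Fin rA → ℤ_[p]) :
    normalizedKerCard (θ x) r n =
      normalizedKerCard (θ fun j => ((PadicInt.toZModPow n (x j)).val : ℤ_[p])) r n := by
  rw [normalizedKerCard, normalizedKerCard, map_toZModPow_congr θ fun j =>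
    (PadicInt.toZModPow_natCast_val n (PadicInt.toZModPow n (x j))).symm]

theorem measurable_normalizedKerCard (r n : ℕ) :
    Measurable fun x => normalizedKerCard (θ x) r n := by
  rw [funext (normalizedKerCard_eq_lift θ r n)]
  exact (Measurable.of_discrete (f := fun a : Fin rA → ZMod (p ^ n) =>
    normalizedKerCard (θ fun j => ((a j).val : ℤ_[p])) r n)).comp (measurable_comp_toZModPow rA n)

theorem lintegral_normalizedKerCard (r n : ℕ) :
    ∫⁻ x, ENNReal.ofReal (normalizedKerCard (θ x) r n) ∂(padicHaarPi p rA) =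
      ENNReal.ofReal
        ((p : ℝ) ^ (-(n : ℤ) * ((rA : ℤ) + (rB : ℤ) - (r : ℤ))) * (solCount p θ n : ℝ)) := by
  have hp : (0 : ℝ) < p := Nat.cast_pos.2 (Fact.out : p.Prime).pos
  rw [lintegral_congr fun x => congrArg ENNReal.ofReal (normalizedKerCard_eq_lift θ r n x),
    lintegral_padicHaarPi_comp_toZModPow rA n fun a =>
    ENNReal.ofReal (normalizedKerCard (θ fun j => ((a j).val : ℤ_[p])) r n),
    ← ENNReal.ofReal_sum_of_nonneg fun a _ => normalizedKerCard_nonneg _ r n]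
  have hpow : ((p : ENNReal) ^ (n * rA))⁻¹ = ENNReal.ofReal ((p : ℝ) ^ (n * rA))⁻¹ := by
    rw [ENNReal.ofReal_inv_of_pos (by positivity), ENNReal.ofReal_pow hp.le, ENNReal.ofReal_natCast]
  rw [hpow, ← ENNReal.ofReal_mul (by positivity)]
  congr 1
  simp_rw [normalizedKerCard]
  rw [← Finset.mul_sum, ← Nat.cast_sum, ← solCount_eq_sum, ← mul_assoc]
  congr 1
  rw [← zpow_natCast, ← zpow_neg, ← zpow_add₀ hp.ne']
  congr 1
  push_cast
  ring

theorem measurable_minorNorm (r : ℕ) : Measurable fun x => minorNorm (θ x) r := by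
  refine Measurable.iSup fun ρ => Continuous.measurable ?_
  have hθ : Continuous θ := LinearMap.continuous_on_pi θ
  exact (hθ.matrix_submatrix ρ.1 ρ.2).matrix_det.norm

end Family
/-- Let `θ : ℤ_p^{r_A} → M_{r_C × r_B}(ℤ_p)` be `ℤ_p`-linear and let
`r` be the maximum over `x` of the rank of `θ(x)` over `ℚ_p` (characterised by: all
`(r+1) × (r+1)` minors of every `θ(x)` vanish, while some `r × r` minor of some `θ(x)`
does not).  Assume `∫_{ℤ_p^{r_A}} ‖Δ_r(x)‖⁻¹ dμ(x) < ∞` (the integrand, valued in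
`[0,∞]`, is finite outside a Haar-null set).  Then
`lim_{n→∞} p^{−n(r_A + r_B − r)} · #{(a,b) : θ_n(a)·b = 0 over ℤ/p^nℤ}` exists and
equals that integral. -/
theorem jet_count_limit_eq_integral (p : ℕ) [Fact p.Prime] (rA rB rC : ℕ)
    (hA : 1 ≤ rA) (hB : 1 ≤ rB) (hC : 1 ≤ rC)
    (θ : (Fin rA → ℤ_[p]) →ₗ[ℤ_[p]] Matrix (Fin rC) (Fin rB) ℤ_[p])
    (r : ℕ)
    (hr : ∀ x : Fin rA → ℤ_[p], minorNorm (θ x) (r + 1) = 0)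
    (hr' : ∃ x : Fin rA → ℤ_[p], minorNorm (θ x) r ≠ 0)
    (hfin : ∫⁻ x, (ENNReal.ofReal (minorNorm (θ x) r))⁻¹ ∂(padicHaarPi p rA) ≠ ⊤) :
    Filter.Tendsto (fun n : ℕ =>
        (p : ℝ) ^ (-(n : ℤ) * ((rA : ℤ) + (rB : ℤ) - (r : ℤ))) * (solCount p θ n : ℝ))
      Filter.atTop
      (nhds ((∫⁻ x, (ENNReal.ofReal (minorNorm (θ x) r))⁻¹ ∂(padicHaarPi p rA)).toReal))
    := by
  have hae : ∀ᵐ x ∂(padicHaarPi p rA), minorNorm (θ x) r ≠ 0 := by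
    filter_upwards [ae_lt_top ((measurable_minorNorm θ r).ennreal_ofReal.inv) hfin] with x hx h0
    simp [h0] at hx
  have hinv : ∀ x, minorNorm (θ x) r ≠ 0 →
      (ENNReal.ofReal (minorNorm (θ x) r))⁻¹ = ENNReal.ofReal (minorNorm (θ x) r)⁻¹ := fun x hx =>
    (ENNReal.ofReal_inv_of_pos
      ((Real.iSup_nonneg fun _ => norm_nonneg _).lt_of_ne hx.symm)).symm
  have hlim := tendsto_lintegral_of_dominated_convergence (μ := padicHaarPi p rA)
    (F := fun n x => ENNReal.ofReal (normalizedKerCard (θ x) r n))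
    (f := fun x => (ENNReal.ofReal (minorNorm (θ x) r))⁻¹)
    (fun x => (ENNReal.ofReal (minorNorm (θ x) r))⁻¹)
    (fun n => (measurable_normalizedKerCard θ r n).ennreal_ofReal)
    (fun n => by
      filter_upwards [hae] with x hx
      rw [hinv x hx]
      exact ENNReal.ofReal_le_ofReal (normalizedKerCard_le hx (hr x) n))
    hfin
    (by
      filter_upwards [hae] with x hx
      rw [hinv x hx]
      exact ENNReal.tendsto_ofReal (tendsto_normalizedKerCard hx (hr x)))
  refine ((ENNReal.tendsto_toReal hfin).comp hlim).congr fun n => ?_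
  rw [Function.comp_apply, lintegral_normalizedKerCard, ENNReal.toReal_ofReal (by positivity)]
end

section
/- Let g ≥ 2 and h ≥ 1 be integers and m₁, …, m_h positive integers; set d := m₁ + ⋯ + m_h. Then g·(d² + Σ_{s=1}^{h} m_s² − 2) − 2(d² − 1) − Σ_{s=2}^{h} m_s·m_{s−1} ≥ d − 1. -/
/-- For positive integers `m₁, …, m_h`, twice `2 Σ m_s² − Σ m_s m_{s−1}` is at least
`2 Σ m_s + 1 + m_h²`. -/
theorem two_mul_sum_add_one_add_sq_le (m : ℕ → ℕ) (h : ℕ) (hh : 1 ≤ h)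
    (hm : ∀ s ∈ Finset.Icc 1 h, 1 ≤ m s) :
    2 * (∑ s ∈ Finset.Icc 1 h, (m s : ℤ)) + 1 + (m h : ℤ) ^ 2 ≤
      2 * (2 * (∑ s ∈ Finset.Icc 1 h, (m s : ℤ) ^ 2)
        - ∑ s ∈ Finset.Icc 2 h, (m s : ℤ) * (m (s - 1) : ℤ)) := by
  induction h, hh using Nat.le_induction with
  | base =>
    have h1 : (1 : ℤ) ≤ m 1 := by exact_mod_cast hm 1 (by simp)
    simp
    nlinarith
  | succ n hn ih =>
    have hx : (1 : ℤ) ≤ m (n + 1) := by exact_mod_cast hm (n + 1) (by simp)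
    have ih := ih fun s hs => hm s (Finset.Icc_subset_Icc_right n.le_succ hs)
    rw [Finset.sum_Icc_succ_top (by omega), Finset.sum_Icc_succ_top (by omega),
      Finset.sum_Icc_succ_top (by omega), Nat.add_sub_cancel]
    nlinarith [sq_nonneg ((m (n + 1) : ℤ) - m n)]

/-- the arithmetic inequality in the dimension bound for top-type
strata of moment-map fibres of the `g`-loop quiver.  Let `g ≥ 2`, `h ≥ 1` and
`m₁, …, m_h` positive integers; set `d := m₁ + ⋯ + m_h`.  Then
`g·(d² + Σ_s m_s² − 2) − 2(d² − 1) − Σ_{s=2}^{h} m_s·m_{s−1} ≥ d − 1`. -/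
theorem gloop_top_type_inequality (g h : ℕ) (hg : 2 ≤ g) (hh : 1 ≤ h)
    (m : ℕ → ℕ) (hm : ∀ s ∈ Finset.Icc 1 h, 1 ≤ m s)
    (d : ℕ) (hd : d = ∑ s ∈ Finset.Icc 1 h, m s) :
    (d : ℤ) - 1 ≤
      (g : ℤ) * ((d : ℤ) ^ 2 + (∑ s ∈ Finset.Icc 1 h, (m s : ℤ) ^ 2) - 2)
        - 2 * ((d : ℤ) ^ 2 - 1)
        - ∑ s ∈ Finset.Icc 2 h, (m s : ℤ) * (m (s - 1) : ℤ) := by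
  have key := two_mul_sum_add_one_add_sq_le m h hh hm
  have hdZ : (d : ℤ) = ∑ s ∈ Finset.Icc 1 h, (m s : ℤ) := by rw [hd]; push_cast; rfl
  rw [← hdZ] at key
  have hmh : (1 : ℤ) ≤ m h := by exact_mod_cast hm h (by simp [hh])
  have hle : ∀ f : ℕ → ℤ, (∀ s, 0 ≤ f s) → f h ≤ ∑ s ∈ Finset.Icc 1 h, f s := fun f hf =>
    Finset.single_le_sum (fun s _ => hf s) (by simp [hh])
  have hd1 : (m h : ℤ) ≤ d := hdZ ▸ hle (fun s => (m s : ℤ)) fun s => by positivity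
  have hQ : (m h : ℤ) ^ 2 ≤ ∑ s ∈ Finset.Icc 1 h, (m s : ℤ) ^ 2 :=
    hle (fun s => (m s : ℤ) ^ 2) fun s => by positivity
  have hg' : (2 : ℤ) ≤ g := by exact_mod_cast hg
  have hnonneg : 0 ≤ (d : ℤ) ^ 2 + (∑ s ∈ Finset.Icc 1 h, (m s : ℤ) ^ 2) - 2 := by nlinarith
  nlinarith [mul_le_mul_of_nonneg_right hg' hnonneg]
end

section
/- Let r ≥ 1 and let V be a finite set of r vertices. For each i ∈ V let g_i ≥ 2 be an integer; for each unordered pair {i,j} of distinct vertices let R_{ij} ≥ 1 be an integer; for each i let d_i ≥ 1 be an integer together with positive integers m_{i,1}, …, m_{i,h_i} (h_i ≥ 1) satisfying Σ_{s=1}^{h_i} m_{i,s} = d_i. Set ⟨d,d⟩ := Σ_{i∈V} (1 − g_i) d_i² − Σ_{{i,j}, i≠j} R_{ij} d_i d_j, r₁ := #{ i : d_i = 1 } and r₂ := #{ i : d_i ≥ 2 }. Then 2·(1 − ⟨d,d⟩ − Σ_i g_i) − ( Σ_i d_i² − 1 + 1 − ⟨d,d⟩ + Σ_i Σ_{s=2}^{h_i}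 m_{i,s} m_{i,s−1} − Σ_i g_i·Σ_{s=1}^{h_i} m_{i,s}² ) ≥ Σ_i (d_i − 1) + 2(r₂ − 1)(r − 1) + r₁(r₁ − 1)/2. -/
open Finset in
/-- The sum of products of consecutive terms is at most the sum of squares, with half of each
end square to spare. -/
theorem sum_mul_pred_le_sum_sq (m : ℕ → ℚ) {h : ℕ} (hh : 1 ≤ h) :
    ∑ s ∈ Icc 2 h, m s * m (s - 1) ≤ ∑ s ∈ Icc 1 h, m s ^ 2 - (m 1 ^ 2 + m h ^ 2) / 2 := by
  induction h, hh using Nat.le_induction with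
  | base => simp
  | succ n hn ih =>
    rw [sum_Icc_succ_top (by lia), sum_Icc_succ_top (by lia), Nat.add_sub_cancel]
    linarith [sq_nonneg (m (n + 1) - m n)]

open Finset in
/-- The contribution of a single vertex with `g ≥ 2` loops and dimension `d` is at least
`d - 3`. -/
theorem sub_three_le_vertex_contribution {g d h : ℕ} (hg : 2 ≤ g) (hd : 1 ≤ d) (hh : 1 ≤ h)
    (m : ℕ → ℕ) (hm : ∀ s ∈ Icc 1 h, 1 ≤ m s) (hsum : ∑ s ∈ Icc 1 h, m s = d) :
    (d : ℚ) - 3 ≤ ((g : ℚ) - 2) * (d : ℚ) ^ 2 - 2 * g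
      - (∑ s ∈ Icc 2 h, (m s : ℚ) * (m (s - 1) : ℚ))
      + (g : ℚ) * ∑ s ∈ Icc 1 h, (m s : ℚ) ^ 2 := by
  have hchain := sum_mul_pred_le_sum_sq (fun s => (m s : ℚ)) hh
  have hsq : (d : ℚ) ≤ ∑ s ∈ Icc 1 h, (m s : ℚ) ^ 2 := by
    rw [← hsum, Nat.cast_sum]
    exact sum_le_sum fun s _ => mod_cast Nat.le_self_pow two_ne_zero (m s)
  have hfirst : (1 : ℚ) ≤ (m 1 : ℚ) ^ 2 := mod_cast Nat.one_le_pow _ _ (hm 1 (by simp [hh]))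
  have hlast : (1 : ℚ) ≤ (m h : ℚ) ^ 2 := mod_cast Nat.one_le_pow _ _ (hm h (by simp [hh]))
  have hg' : (2 : ℚ) ≤ g := mod_cast hg
  have hd' : (1 : ℚ) ≤ d := mod_cast hd
  have hgap : 0 ≤ ((g : ℚ) - 2) * ((d : ℚ) ^ 2 - 2 + ∑ s ∈ Icc 1 h, (m s : ℚ) ^ 2) :=
    mul_nonneg (by linarith) (by nlinarith)
  linarith

open Finset in
theorem sum_offDiag_mul {V : Type*} [Fintype V] [DecidableEq V] (a : V → ℚ) :
    ∑ p ∈ (univ : Finset V).offDiag, a p.1 * a p.2 = (∑ i, a i) ^ 2 - ∑ i, a i ^ 2 := by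
  have hsplit : ∑ p ∈ (univ : Finset V) ×ˢ univ, a p.1 * a p.2
      = ∑ i, a i * a i + ∑ p ∈ (univ : Finset V).offDiag, a p.1 * a p.2 := by
    rw [← diag_union_offDiag, sum_union (disjoint_diag_offDiag _), sum_diag]
  rw [sum_product, ← sum_mul_sum] at hsplit
  simp only [sq]
  linarith

open Finset in
/-- Bounding each `d i` below by `min (d i) 2` bounds the sum over ordered pairs of distinct
vertices in terms of the numbers of vertices of dimension one and of dimension at least two. -/
theorem le_sum_offDiag_mul {V : Type*} [Fintype V] [DecidableEq V] (R : V → V → ℕ)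
    (hR : ∀ i j, i ≠ j → 1 ≤ R i j) (d : V → ℕ) (hd : ∀ i, 1 ≤ d i) :
    ((#{i | d i = 1} : ℚ) + 2 * #{i | 2 ≤ d i}) ^ 2 - (#{i | d i = 1} + 4 * #{i | 2 ≤ d i})
      ≤ ∑ p ∈ (univ : Finset V).offDiag, (R p.1 p.2 : ℚ) * (d p.1 : ℚ) * (d p.2 : ℚ) := by
  let a : V → ℚ := fun i => (if d i = 1 then 1 else 0) + 2 * (if 2 ≤ d i then 1 else 0)
  have ha_sum : ∑ i, a i = (#{i | d i = 1} : ℚ) + 2 * #{i | 2 ≤ d i} := by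
    simp only [a, sum_add_distrib, ← mul_sum, sum_boole]
  have ha_sq : ∑ i, a i ^ 2 = (#{i | d i = 1} : ℚ) + 4 * #{i | 2 ≤ d i} := by
    rw [← sum_boole, ← sum_boole, mul_sum, ← sum_add_distrib]
    refine sum_congr rfl fun i _ => ?_
    simp only [a]
    split_ifs <;> first | lia | norm_num
  have ha_nonneg : ∀ i, 0 ≤ a i := fun i => by positivity
  have ha_le : ∀ i, a i ≤ d i := fun i => by
    rcases (hd i).eq_or_lt with h | h
    · simp [a, ← h]
    · simp [a, h.ne', Nat.succ_le_of_lt h]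
  rw [← ha_sum, ← ha_sq, ← sum_offDiag_mul]
  refine sum_le_sum fun p hp => ?_
  have hRp : (1 : ℚ) ≤ R p.1 p.2 := mod_cast hR _ _ (mem_offDiag.mp hp).2.2
  calc a p.1 * a p.2 ≤ (d p.1 : ℚ) * d p.2 :=
        mul_le_mul (ha_le _) (ha_le _) (ha_nonneg _) (by positivity)
    _ ≤ R p.1 p.2 * ((d p.1 : ℚ) * d p.2) := le_mul_of_one_le_left (by positivity) hRp
    _ = R p.1 p.2 * (d p.1 : ℚ) * d p.2 := (mul_assoc _ _ _).symm


/-- the arithmetic core of the dimension bound for totally negative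
quivers.  Let `V` be a finite set of `r ≥ 1` vertices, `g_i ≥ 2` the number of loops at
`i`, `R_{ij} = R_{ji} ≥ 1` the number of arrows joining distinct `i, j`, and for each
`i` let `d_i ≥ 1` be written as `d_i = m_{i,1} + ⋯ + m_{i,h_i}` with `h_i ≥ 1` and all
`m_{i,s} ≥ 1`.  With `⟨d,d⟩ := Σ_i (1 − g_i) d_i² − Σ_{{i,j}, i≠j} R_{ij} d_i d_j`
(the sum over unordered pairs being half the sum over ordered pairs),
`r₁ := #{i : d_i = 1}` and `r₂ := #{i : d_i ≥ 2}`, one has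
`2·(1 − ⟨d,d⟩ − Σ_i g_i) − (Σ_i d_i² − 1 + 1 − ⟨d,d⟩ + Σ_i Σ_{s=2}^{h_i} m_{i,s} m_{i,s−1}`
`− Σ_i g_i·Σ_s m_{i,s}²) ≥ Σ_i (d_i − 1) + 2(r₂ − 1)(r − 1) + r₁(r₁ − 1)/2`. -/
theorem totally_negative_dimension_inequality (V : Type) [Fintype V] [DecidableEq V]
    (hV : 1 ≤ Fintype.card V)
    (g : V → ℕ) (hg : ∀ i, 2 ≤ g i)
    (R : V → V → ℕ) (hRsymm : ∀ i j, R i j = R j i) (hR : ∀ i j, i ≠ j → 1 ≤ R i j)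
    (d : V → ℕ) (hd : ∀ i, 1 ≤ d i)
    (h : V → ℕ) (hh : ∀ i, 1 ≤ h i)
    (m : V → ℕ → ℕ) (hm : ∀ i, ∀ s ∈ Finset.Icc 1 (h i), 1 ≤ m i s)
    (hsum : ∀ i, ∑ s ∈ Finset.Icc 1 (h i), m i s = d i)
    (euler : ℚ)
    (heuler : euler = (∑ i : V, (1 - (g i : ℚ)) * (d i : ℚ) ^ 2)
      - (∑ p ∈ (Finset.univ : Finset V).offDiag,
          (R p.1 p.2 : ℚ) * (d p.1 : ℚ) * (d p.2 : ℚ)) / 2) :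
    (∑ i : V, ((d i : ℚ) - 1))
      + 2 * (((Finset.univ.filter fun i : V => 2 ≤ d i).card : ℚ) - 1)
          * ((Fintype.card V : ℚ) - 1)
      + ((Finset.univ.filter fun i : V => d i = 1).card : ℚ)
          * (((Finset.univ.filter fun i : V => d i = 1).card : ℚ) - 1) / 2
    ≤ 2 * (1 - euler - ∑ i : V, (g i : ℚ))
      - ((∑ i : V, (d i : ℚ) ^ 2) - 1 + 1 - euler
        + (∑ i : V, ∑ s ∈ Finset.Icc 2 (h i), (m i s : ℚ) * (m i (s - 1) : ℚ))
        - ∑ i : V, (g i : ℚ) * ∑ s ∈ Finset.Icc 1 (h i), (m i s : ℚ) ^ 2) := by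
  have hvertex := Finset.sum_le_sum fun i (_ : i ∈ Finset.univ) =>
    sub_three_le_vertex_contribution (hg i) (hd i) (hh i) (m i) (hm i) (hsum i)
  have hpairs := le_sum_offDiag_mul R hR d hd
  have hcard : (Fintype.card V : ℚ) = (Finset.univ.filter fun i : V => d i = 1).card
      + (Finset.univ.filter fun i : V => 2 ≤ d i).card := by
    rw [← Finset.card_univ,
      ← Finset.card_filter_add_card_filter_not (s := Finset.univ) (fun i : V => d i = 1)]
    push_cast
    congr 3
    ext i
    have := hd i
    simp only [Finset.mem_filter, Finset.mem_univ, true_and]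
    lia
  simp only [sub_mul, one_mul, Finset.sum_sub_distrib, Finset.sum_add_distrib, ← Finset.mul_sum,
    Finset.sum_const, Finset.card_univ, nsmul_eq_mul, mul_one] at hvertex heuler ⊢
  rw [heuler, hcard]
  rw [hcard] at hvertex
  linarith
end
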